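/- arXiv:1606.07877 — 6 statements merged into one kernel-verified Lean document; each statement's English description precedes it below -/
import Mathlib

section
/- For every δ > 0 there exists a constant C < ∞ depending only on δ with the following property. Let T > 0, let u : B × [0,T) → (0,∞) be a smooth solution of ∂_t u = Δ log u with initial value u₀ := u(·,0), and let α ≥ 1 be such that the positive part (u₀ − α h̃)₊ is integrable on B. Then for every t ∈ [0, min{1,T}) with t ≥ (1+δ) · ‖(u₀ − α h̃)₊‖_{L¹(B)} / (4π), one has u(x,t) ≤ C α h̃(x) for all x ∈ B. -/
open Real MeasureTheory Metric Set Filter Topology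

/-- The Euclidean Laplacian of a function on `ℝ²`. -/
noncomputable def lap (f : EuclideanSpace ℝ (Fin 2) → ℝ) (x : EuclideanSpace ℝ (Fin 2)) : ℝ :=
  iteratedFDeriv ℝ 2 f x ![EuclideanSpace.single 0 1, EuclideanSpace.single 0 1] +
  iteratedFDeriv ℝ 2 f x ![EuclideanSpace.single 1 1, EuclideanSpace.single 1 1]

/-- The conformal factor `h̃(x) = (2/(1-|x|²))²` of the Poincaré metric on the unit disc. -/
noncomputable def poincareH (x : EuclideanSpace ℝ (Fin 2)) : ℝ :=
  (2 / (1 - ‖x‖^2))^2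

/-!
Compare `u` with the solution `b = (α + 2t) h̃` that expands from `α h̃`. Let `L` and `W` be smooth
substitutes for the positive parts of `log (u / b)` and `u - b`, and let `P` denote the logarithmic
potential, so that `-Δ (P W) = W`. Since `∂ₜ W ≤ Δ L`, one has `∂ₜ (P W) ≤ -L`, which cancels the
term `L` in `∂ₜ (t L)`. At a positive maximum of `t L + P W - P W₀ - t` this forces `t ∂ₜ L ≥ 1`,
whereas the equation then makes the Laplacian of the same quantity positive. Hence
`log (u / b) ≤ 2 + P W₀ / t`.

By the Brezis–Merle inequality `exp (P W₀ / t)` lies in `L^p` for some `p > 1` as soon as the mass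
of `W₀` is less than `4πt`. So `u` at a time `θ < 1` is in `L^p` on a smaller disc, its logarithmic
potential is bounded there, and the same comparison started at time `θ` gives a pointwise bound.
Parabolic rescaling reduces the estimate at `(x, t)` to the centre of the unit disc at time `1`.
-/

open InnerProductSpace
open scoped Convolution Gradient Laplacian

section Laplacian

variable {V : Type*} [NormedAddCommGroup V] [NormedSpace ℝ V] {f : V → ℝ} {x : V}

lemma contDiffAt_fderiv_apply (hf : ContDiffAt ℝ 2 f x) (v : V) :
    ContDiffAt ℝ 1 (fun y ↦ fderiv ℝ f y v) x :=
  (hf.fderiv_right (m := 1) (by norm_num)).clm_apply contDiffAt_const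

lemma contDiff_fderiv_apply (hf : ContDiff ℝ 2 f) (v : V) :
    ContDiff ℝ 1 (fun y ↦ fderiv ℝ f y v) :=
  contDiff_iff_contDiffAt.2 fun _ ↦ contDiffAt_fderiv_apply hf.contDiffAt v

lemma continuous_fderiv_apply_const (hf : ContDiff ℝ 1 f) (v : V) :
    Continuous fun x ↦ fderiv ℝ f x v :=
  (hf.continuous_fderiv (by norm_num)).clm_apply continuous_const

lemma fderiv_fderiv_apply (hf : ContDiffAt ℝ 2 f x) (v w : V) :
    fderiv ℝ (fun y ↦ fderiv ℝ f y v) x w = fderiv ℝ (fderiv ℝ f) x w v := by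
  have hf' : DifferentiableAt ℝ (fderiv ℝ f) x :=
    (hf.fderiv_right (m := 1) (by norm_num)).differentiableAt (by norm_num)
  simp [(hf'.hasFDerivAt.clm_apply (hasFDerivAt_const v x)).fderiv]

lemma deriv_deriv_nonpos_of_isLocalMax {φ : ℝ → ℝ} {a : ℝ} (hφ : ContinuousAt φ a)
    (hmax : IsLocalMax φ a) : deriv (deriv φ) a ≤ 0 := by
  by_contra! hpos
  have hmin : IsLocalMin φ a := isLocalMin_of_deriv_deriv_pos hpos hmax.deriv_eq_zero hφ
  have hconst : φ =ᶠ[𝓝 a] fun _ ↦ φ a := by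
    filter_upwards [hmax, hmin] with s h₁ h₂ using le_antisymm h₁ h₂
  have hderiv : deriv φ =ᶠ[𝓝 a] fun _ ↦ 0 := by simpa using hconst.deriv
  exact hpos.ne' (by simpa using hderiv.deriv_eq)

lemma fderiv_fderiv_nonpos_of_isLocalMax (hf : ContDiffAt ℝ 2 f x) (hmax : IsLocalMax f x)
    (v : V) : fderiv ℝ (fun y ↦ fderiv ℝ f y v) x v ≤ 0 := by
  have hline (s : ℝ) : HasDerivAt (fun s : ℝ ↦ x + s • v) v s := by
    simpa using ((hasDerivAt_id s).smul_const v).const_add x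
  have hlim : Tendsto (fun s : ℝ ↦ x + s • v) (𝓝 0) (𝓝 x) := by
    simpa using (hline 0).continuousAt.tendsto
  have hderiv : deriv (fun s : ℝ ↦ f (x + s • v)) =ᶠ[𝓝 0] fun s ↦ fderiv ℝ f (x + s • v) v := by
    filter_upwards [hlim.eventually (hf.eventually (by simp))] with s hs
    exact ((hs.differentiableAt (by norm_num)).hasFDerivAt.comp_hasDerivAt s (hline s)).deriv
  have hderiv₂ : deriv (deriv fun s : ℝ ↦ f (x + s • v)) 0 =
      fderiv ℝ (fun y ↦ fderiv ℝ f y v) x v := by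
    rw [hderiv.deriv_eq]
    refine HasDerivAt.deriv (HasFDerivAt.comp_hasDerivAt (l := fun y ↦ fderiv ℝ f y v) 0 ?_
      (hline 0))
    simpa using ((contDiffAt_fderiv_apply hf v).differentiableAt (by norm_num)).hasFDerivAt
  rw [← hderiv₂]
  refine deriv_deriv_nonpos_of_isLocalMax ?_ ?_
  · simpa [ContinuousAt, Function.comp_def] using hf.continuousAt.tendsto.comp hlim
  · simpa [IsLocalMax, IsMaxFilter] using hlim.eventually hmax

variable {E : Type*} [NormedAddCommGroup E] [InnerProductSpace ℝ E] [FiniteDimensional ℝ E]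
  {f : E → ℝ} {x : E} {ι : Type*} [Fintype ι]

lemma laplacian_eq_sum_fderiv (hf : ContDiffAt ℝ 2 f x) (b : OrthonormalBasis ι ℝ E) :
    Δ f x = ∑ i, fderiv ℝ (fun y ↦ fderiv ℝ f y (b i)) x (b i) := by
  simp [laplacian_eq_iteratedFDeriv_orthonormalBasis f b, iteratedFDeriv_two_apply,
    fderiv_fderiv_apply hf]

lemma laplacian_nonpos_of_isLocalMax (hf : ContDiffAt ℝ 2 f x) (hmax : IsLocalMax f x) :
    Δ f x ≤ 0 := by
  rw [laplacian_eq_sum_fderiv hf (stdOrthonormalBasis ℝ E)]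
  exact Finset.sum_nonpos fun i _ ↦ fderiv_fderiv_nonpos_of_isLocalMax hf hmax _

lemma sum_sq_fderiv_eq_norm_gradient_sq (b : OrthonormalBasis ι ℝ E) :
    ∑ i, fderiv ℝ f x (b i) ^ 2 = ‖∇ f x‖ ^ 2 := by
  simp [← b.sum_sq_norm_inner_left (∇ f x), inner_gradient_left]

lemma laplacian_comp {φ φ' : ℝ → ℝ} {φ'' : ℝ} (hf : ContDiffAt ℝ 2 f x)
    (hφ : ContDiffAt ℝ 2 φ (f x)) (hφ' : ∀ᶠ s in 𝓝 (f x), HasDerivAt φ (φ' s) s)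
    (hφ'' : HasDerivAt φ' φ'' (f x)) :
    Δ (fun y ↦ φ (f y)) x = φ' (f x) * Δ f x + φ'' * ‖∇ f x‖ ^ 2 := by
  set b := stdOrthonormalBasis ℝ E
  have hcomp : ContDiffAt ℝ 2 (fun y ↦ φ (f y)) x := hφ.comp x hf
  rw [laplacian_eq_sum_fderiv hcomp b, laplacian_eq_sum_fderiv hf b,
    ← sum_sq_fderiv_eq_norm_gradient_sq b, Finset.mul_sum, Finset.mul_sum,
    ← Finset.sum_add_distrib]
  refine Finset.sum_congr rfl fun i _ ↦ ?_
  have hfirst : (fun y ↦ fderiv ℝ (fun z ↦ φ (f z)) y (b i)) =ᶠ[𝓝 x]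
      fun y ↦ φ' (f y) * fderiv ℝ f y (b i) := by
    filter_upwards [hf.eventually (by simp), hf.continuousAt.eventually hφ'] with y hfy hφy
    have hφfy : HasFDerivAt (fun z ↦ φ (f z)) (φ' (f y) • fderiv ℝ f y) y :=
      hφy.comp_hasFDerivAt y (hfy.differentiableAt (by norm_num)).hasFDerivAt
    simp [hφfy.fderiv]
  have hsecond : HasFDerivAt (fun y ↦ φ' (f y) * fderiv ℝ f y (b i)) _ x :=
    (hφ''.comp_hasFDerivAt x (hf.differentiableAt (by norm_num)).hasFDerivAt).mul
      ((contDiffAt_fderiv_apply hf (b i)).differentiableAt (by norm_num)).hasFDerivAt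
  rw [hfirst.fderiv_eq, hsecond.fderiv]
  simp only [Function.comp_apply, add_apply, smul_apply, smul_eq_mul]
  ring

lemma hasGradientAt_norm_sq (x : E) : HasGradientAt (fun y : E ↦ ‖y‖ ^ 2) ((2 : ℝ) • x) x := by
  rw [hasGradientAt_iff_hasFDerivAt]
  have hderiv : toDual ℝ E ((2 : ℝ) • x) = 2 • innerSL ℝ x := by
    ext v
    simp
  simpa only [hderiv] using (hasStrictFDerivAt_norm_sq x).hasFDerivAt

lemma norm_gradient_norm_sq (x : E) : ‖∇ (fun y : E ↦ ‖y‖ ^ 2) x‖ ^ 2 = 4 * ‖x‖ ^ 2 := by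
  rw [(hasGradientAt_norm_sq x).gradient, norm_smul, mul_pow]
  norm_num

lemma laplacian_norm_sq (x : E) :
    Δ (fun y : E ↦ ‖y‖ ^ 2) x = 2 * Module.finrank ℝ E := by
  have hsecond (v : E) :
      fderiv ℝ (fun y ↦ fderiv ℝ (fun y : E ↦ ‖y‖ ^ 2) y v) x v = 2 * ‖v‖ ^ 2 := by
    have hfirst : (fun y ↦ fderiv ℝ (fun y : E ↦ ‖y‖ ^ 2) y v) =
        ((2 : ℝ) • innerSL ℝ v : StrongDual ℝ E) := by
      ext y
      rw [(hasGradientAt_norm_sq y).fderiv_apply]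
      simp [inner_smul_left, real_inner_comm]
    rw [hfirst, ContinuousLinearMap.fderiv]
    simp
  rw [laplacian_eq_sum_fderiv (contDiff_norm_sq ℝ).contDiffAt (stdOrthonormalBasis ℝ E)]
  simp only [hsecond, OrthonormalBasis.norm_eq_one, one_pow, mul_one, Finset.sum_const,
    Finset.card_univ, Fintype.card_fin, nsmul_eq_mul]
  ring

lemma laplacian_comp_add_smul (f : E → ℝ) (c : E) (r : ℝ) (x : E) :
    Δ (fun y ↦ f (c + r • y)) x = r ^ 2 * Δ f (c + r • x) := by
  have hfderiv : fderiv ℝ (fun y ↦ f (c + r • y)) = r • fun y ↦ fderiv ℝ f (c + r • y) := by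
    ext1 y
    rw [fderiv_comp_smul (f := fun z ↦ f (c + z)), fderiv_comp_add_left, Pi.smul_apply]
  rw [laplacian_eq_iteratedFDeriv_stdOrthonormalBasis,
    laplacian_eq_iteratedFDeriv_stdOrthonormalBasis, Finset.mul_sum]
  refine Finset.sum_congr rfl fun i _ ↦ ?_
  rw [iteratedFDeriv_two_apply, iteratedFDeriv_two_apply, hfderiv,
    fderiv_const_smul_field (f := fun y ↦ fderiv ℝ f (c + r • y)) r, Pi.smul_apply,
    fderiv_comp_smul (f := fun z ↦ fderiv ℝ f (c + z)), fderiv_comp_add_left]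
  simp only [smul_apply, smul_eq_mul]
  ring

end Laplacian

section LaplacianIntegral

variable {E : Type*} [NormedAddCommGroup E] [InnerProductSpace ℝ E] [FiniteDimensional ℝ E]
  {f g : E → ℝ}

lemma continuous_laplacian (hf : ContDiff ℝ 2 f) : Continuous (Δ f) := by
  have hsum : Δ f = fun x ↦ ∑ i, fderiv ℝ (fun y ↦ fderiv ℝ f y (stdOrthonormalBasis ℝ E i)) x
      (stdOrthonormalBasis ℝ E i) := by
    ext x
    exact laplacian_eq_sum_fderiv hf.contDiffAt _
  rw [hsum]
  exact continuous_finsetSum _ fun i _ ↦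
    continuous_fderiv_apply_const (contDiff_fderiv_apply hf _) _

lemma hasCompactSupport_laplacian (hf : HasCompactSupport f) : HasCompactSupport (Δ f) := by
  refine hf.mono' fun x hx ↦ ?_
  contrapose! hx
  have hzero : f =ᶠ[𝓝 x] fun _ ↦ 0 := notMem_tsupport_iff_eventuallyEq.1 hx
  rw [Function.notMem_support, (laplacian_congr_nhds hzero).eq_of_nhds, laplacian_const,
    Pi.zero_apply]

variable [MeasurableSpace E] [BorelSpace E] {μ : Measure E}

section Haar

variable [μ.IsAddHaarMeasure]

lemma integral_mul_fderiv_of_hasCompactSupport (hf : ContDiff ℝ 1 f) (hg : ContDiff ℝ 1 g)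
    (hgc : HasCompactSupport g) (v : E) :
    ∫ y, f y * fderiv ℝ g y v ∂μ = -∫ y, fderiv ℝ f y v * g y ∂μ := by
  refine integral_mul_fderiv_eq_neg_fderiv_mul_of_integrable ?_ ?_ ?_
    (fun x _ ↦ hf.differentiable (by norm_num) x) fun x _ ↦ hg.differentiable (by norm_num) x
  · exact ((continuous_fderiv_apply_const hf v).mul hg.continuous).integrable_of_hasCompactSupport
      hgc.mul_left
  · exact (hf.continuous.mul (continuous_fderiv_apply_const hg v)).integrable_of_hasCompactSupport
      (hgc.fderiv_apply ℝ v).mul_left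
  · exact (hf.continuous.mul hg.continuous).integrable_of_hasCompactSupport hgc.mul_left

lemma integral_mul_laplacian (hf : ContDiff ℝ 2 f) (hg : ContDiff ℝ 2 g)
    (hgc : HasCompactSupport g) : ∫ y, f y * Δ g y ∂μ = ∫ y, Δ f y * g y ∂μ := by
  set b := stdOrthonormalBasis ℝ E
  have hfb (i) := contDiff_fderiv_apply hf (b i)
  have hgb (i) := contDiff_fderiv_apply hg (b i)
  simp only [laplacian_eq_sum_fderiv hf.contDiffAt b, laplacian_eq_sum_fderiv hg.contDiffAt b,
    Finset.mul_sum, Finset.sum_mul]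
  rw [integral_finsetSum, integral_finsetSum]
  · refine Finset.sum_congr rfl fun i _ ↦ ?_
    rw [integral_mul_fderiv_of_hasCompactSupport (hf.of_le (by norm_num)) (hgb i)
        (hgc.fderiv_apply ℝ _),
      integral_mul_fderiv_of_hasCompactSupport (hfb i) (hg.of_le (by norm_num)) hgc, neg_neg]
  · exact fun i _ ↦ ((continuous_fderiv_apply_const (hfb i) _).mul
      hg.continuous).integrable_of_hasCompactSupport hgc.mul_left
  · exact fun i _ ↦ (hf.continuous.mul
      (continuous_fderiv_apply_const (hgb i) _)).integrable_of_hasCompactSupport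
      ((hgc.fderiv_apply ℝ _).fderiv_apply ℝ _).mul_left

lemma integral_laplacian_eq_zero (hg : ContDiff ℝ 2 g) (hgc : HasCompactSupport g) :
    ∫ y, Δ g y ∂μ = 0 := by
  simpa using integral_mul_laplacian (μ := μ) (contDiff_const (c := (1 : ℝ))) hg hgc

end Haar

variable [SFinite μ] [μ.IsAddLeftInvariant]

omit [FiniteDimensional ℝ E] in
lemma fderiv_convolution_apply (hf : LocallyIntegrable f μ) (hg : ContDiff ℝ 1 g)
    (hgc : HasCompactSupport g) (x v : E) :
    fderiv ℝ (f ⋆[ContinuousLinearMap.mul ℝ ℝ, μ] g) x v =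
      (f ⋆[ContinuousLinearMap.mul ℝ ℝ, μ] fun y ↦ fderiv ℝ g y v) x := by
  rw [(hgc.hasFDerivAt_convolution_right _ hf hg x).fderiv,
    convolution_precompR_apply _ hf (hgc.fderiv ℝ) (hg.continuous_fderiv (by norm_num))]

lemma laplacian_convolution (hf : LocallyIntegrable f μ) (hg : ContDiff ℝ 2 g)
    (hgc : HasCompactSupport g) :
    Δ (f ⋆[ContinuousLinearMap.mul ℝ ℝ, μ] g) = f ⋆[ContinuousLinearMap.mul ℝ ℝ, μ] Δ g := by
  set b := stdOrthonormalBasis ℝ E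
  have hgb (i) := contDiff_fderiv_apply hg (b i)
  ext x
  have hconv : ContDiff ℝ 2 (f ⋆[ContinuousLinearMap.mul ℝ ℝ, μ] g) :=
    hgc.contDiff_convolution_right (n := 2) _ hf hg
  have hterm (i) : fderiv ℝ
      (fun y ↦ fderiv ℝ (f ⋆[ContinuousLinearMap.mul ℝ ℝ, μ] g) y (b i)) x (b i) =
      ∫ z, f z * fderiv ℝ (fun y ↦ fderiv ℝ g y (b i)) (x - z) (b i) ∂μ := by
    have hfirst : (fun y ↦ fderiv ℝ (f ⋆[ContinuousLinearMap.mul ℝ ℝ, μ] g) y (b i)) =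
        f ⋆[ContinuousLinearMap.mul ℝ ℝ, μ] fun y ↦ fderiv ℝ g y (b i) :=
      funext fun y ↦ fderiv_convolution_apply hf (hg.of_le (by norm_num)) hgc y (b i)
    rw [hfirst, fderiv_convolution_apply hf (hgb i) (hgc.fderiv_apply ℝ _)]
    rfl
  rw [laplacian_eq_sum_fderiv hconv.contDiffAt b, Finset.sum_congr rfl fun i _ ↦ hterm i,
    ← integral_finsetSum]
  · simp [convolution_def, laplacian_eq_sum_fderiv hg.contDiffAt b]
  · intro i _
    exact (((hgc.fderiv_apply ℝ _).fderiv_apply ℝ _).convolutionExists_right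
      (ContinuousLinearMap.mul ℝ ℝ) hf (continuous_fderiv_apply_const (hgb i) _) x).integrable

end LaplacianIntegral

section LogKernel

/-- The plane `ℝ²` with its Euclidean norm. -/
abbrev Plane := EuclideanSpace ℝ (Fin 2)

lemma lap_eq_laplacian (f : Plane → ℝ) : lap f = Δ f := by
  ext x
  simp [lap, laplacian_eq_iteratedFDeriv_orthonormalBasis f (EuclideanSpace.basisFun (Fin 2) ℝ)]

lemma volume_real_unitBall_plane : (volume : Measure Plane).real (ball 0 1) = π := by
  simp [Measure.real, pi_pos.le]

lemma abs_log_le_add_inv {s : ℝ} (hs : 0 < s) : |log s| ≤ s + s⁻¹ := by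
  have hupper := log_le_sub_one_of_pos hs
  have hlower := one_sub_inv_le_log_of_pos hs
  have hinv := inv_pos.2 hs
  exact abs_le.2 ⟨by linarith, by linarith⟩

lemma locallyIntegrable_log_norm {E : Type*} [NormedAddCommGroup E] [NormedSpace ℝ E]
    [FiniteDimensional ℝ E] [MeasurableSpace E] [BorelSpace E] {μ : Measure E}
    [μ.IsAddHaarMeasure] (hE : 1 < Module.finrank ℝ E) :
    LocallyIntegrable (fun y : E ↦ log ‖y‖) μ := by
  rw [locallyIntegrable_iff]
  intro K hK
  obtain ⟨R, -, hKR⟩ := hK.isBounded.exists_pos_norm_lt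
  refine IntegrableOn.mono_set (t := ball 0 R) ?_ fun x hx ↦ mem_ball_zero_iff.2 (hKR x hx)
  refine integrableOn_ball_of_norm_le_rpow (C := R ^ 2 + 1) (α := 1) (by lia)
    (by exact_mod_cast hE) ?_ (measurable_log.comp measurable_norm).aestronglyMeasurable
  filter_upwards [ae_restrict_mem measurableSet_ball] with x hx
  rw [mem_ball_zero_iff] at hx
  rw [rpow_neg_one]
  rcases eq_or_ne x 0 with rfl | hx₀
  · simp
  have hnorm : 0 < ‖x‖ := norm_pos_iff.2 hx₀
  have hle : ‖x‖ ≤ R ^ 2 * ‖x‖⁻¹ := by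
    rw [← div_eq_mul_inv, le_div_iff₀ hnorm]
    nlinarith
  calc |log ‖x‖| ≤ ‖x‖ + ‖x‖⁻¹ := abs_log_le_add_inv hnorm
    _ ≤ R ^ 2 * ‖x‖⁻¹ + ‖x‖⁻¹ := by gcongr
    _ = (R ^ 2 + 1) * ‖x‖⁻¹ := by ring

/-- The smooth approximation `½ log (|y|² + c⁻²)` of `log |y|` as `c → ∞`. -/
noncomputable def regularizedLog (c : ℝ) (y : Plane) : ℝ := 1 / 2 * log (‖y‖ ^ 2 + (c ^ 2)⁻¹)

/-- The area density of the round sphere of area `1` in stereographic coordinates. -/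
noncomputable def sphericalDensity (z : Plane) : ℝ := π⁻¹ * ((‖z‖ ^ 2 + 1) ^ 2)⁻¹

variable {c : ℝ} {g : Plane → ℝ}

lemma sphericalDensity_nonneg (z : Plane) : 0 ≤ sphericalDensity z := by
  have := pi_pos
  unfold sphericalDensity
  positivity

lemma integral_sphericalDensity : ∫ z, sphericalDensity z = 1 := by
  have hderiv : ∀ r ∈ Ici (0 : ℝ), HasDerivAt (fun r : ℝ ↦ -(2 * π)⁻¹ * (r ^ 2 + 1)⁻¹)
      (r ^ (2 - 1) • (π⁻¹ * ((r ^ 2 + 1) ^ 2)⁻¹)) r := by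
    intro r _
    have hbase : HasDerivAt (fun r : ℝ ↦ r ^ 2 + 1) (2 * r) r := by
      simpa using (hasDerivAt_pow 2 r).add_const 1
    refine ((hbase.inv (by positivity)).const_mul _).congr_deriv ?_
    simp only [mul_inv_rev, neg_mul, Nat.add_one_sub_one, pow_one, smul_eq_mul]
    field_simp
  have hlim : Tendsto (fun r : ℝ ↦ -(2 * π)⁻¹ * (r ^ 2 + 1)⁻¹) atTop (𝓝 0) := by
    simpa using (tendsto_inv_atTop_zero.comp (tendsto_atTop_add_const_right atTop (1 : ℝ)
      (tendsto_pow_atTop two_ne_zero))).const_mul (-(2 * π)⁻¹)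
  have hpos : ∀ r ∈ Ioi (0 : ℝ), 0 ≤ r ^ (2 - 1) • (π⁻¹ * ((r ^ 2 + 1) ^ 2)⁻¹) := by
    intro r hr
    have := mem_Ioi.1 hr
    have := pi_pos
    simp only [smul_eq_mul]
    positivity
  simp only [sphericalDensity]
  rw [integral_fun_norm_addHaar volume fun r : ℝ ↦ π⁻¹ * ((r ^ 2 + 1) ^ 2)⁻¹,
    volume_real_unitBall_plane, finrank_euclideanSpace_fin,
    integral_Ioi_of_hasDerivAt_of_nonneg' hderiv hpos hlim]
  simp [pi_ne_zero]

lemma tendsto_norm_pow_mul_sphericalDensity :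
    Tendsto (fun z : Plane ↦ ‖z‖ ^ 2 * sphericalDensity z) (Bornology.cobounded Plane) (𝓝 0) := by
  have hlim : Tendsto (fun r : ℝ ↦ π⁻¹ * (r ^ 2 + 1)⁻¹) atTop (𝓝 0) := by
    simpa using (tendsto_inv_atTop_zero.comp (tendsto_atTop_add_const_right atTop (1 : ℝ)
      (tendsto_pow_atTop two_ne_zero))).const_mul π⁻¹
  refine squeeze_zero (fun z ↦ mul_nonneg (by positivity) (sphericalDensity_nonneg z))
    (fun z ↦ ?_) (hlim.comp tendsto_norm_cobounded_atTop)
  have := pi_pos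
  calc ‖z‖ ^ 2 * sphericalDensity z
      = π⁻¹ * (‖z‖ ^ 2 + 1)⁻¹ * (‖z‖ ^ 2 / (‖z‖ ^ 2 + 1)) := by
        rw [sphericalDensity]
        field_simp
    _ ≤ π⁻¹ * (‖z‖ ^ 2 + 1)⁻¹ :=
        mul_le_of_le_one_right (by positivity) ((div_le_one (by positivity)).2 (by linarith))

lemma contDiff_regularizedLog (hc : 0 < c) {n : WithTop ℕ∞} : ContDiff ℝ n (regularizedLog c) :=
  contDiff_const.mul (((contDiff_norm_sq ℝ).add contDiff_const).log fun x ↦ by positivity)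

lemma laplacian_regularizedLog (hc : 0 < c) (y : Plane) :
    Δ (regularizedLog c) y = 2 * π * (c ^ 2 * sphericalDensity (c • y)) := by
  have hne : ‖y‖ ^ 2 + (c ^ 2)⁻¹ ≠ 0 := by positivity
  have hcomp := laplacian_comp (φ := fun s ↦ 1 / 2 * log (s + (c ^ 2)⁻¹))
    (φ' := fun s ↦ 1 / 2 * (1 / (s + (c ^ 2)⁻¹)))
    (φ'' := 1 / 2 * (-1 / (‖y‖ ^ 2 + (c ^ 2)⁻¹) ^ 2)) (x := y)
    (contDiff_norm_sq ℝ).contDiffAt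
    (contDiffAt_const.mul ((contDiffAt_id.add contDiffAt_const).log hne)) ?_ ?_
  · rw [laplacian_norm_sq, norm_gradient_norm_sq, finrank_euclideanSpace_fin] at hcomp
    refine hcomp.trans ?_
    have := pi_pos
    simp only [sphericalDensity, norm_smul, norm_eq_abs, mul_pow, sq_abs]
    push_cast
    field_simp
    ring
  · filter_upwards [(continuousAt_id.add continuousAt_const).eventually_ne hne] with s hs
    exact (((hasDerivAt_id s).add_const _).log hs).const_mul _
  · simpa [one_div] using
      (((hasDerivAt_id (‖y‖ ^ 2)).add_const (c ^ 2)⁻¹).inv hne).const_mul (1 / 2 : ℝ)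

lemma log_norm_eq_half_log_norm_sq (y : Plane) : log ‖y‖ = 1 / 2 * log (‖y‖ ^ 2) := by
  rw [log_pow]
  push_cast
  ring

lemma abs_regularizedLog_le (hc : 1 ≤ c) {y : Plane} (hy : y ≠ 0) :
    |regularizedLog c y| ≤ |log ‖y‖| + |regularizedLog 1 y| := by
  have := norm_pos_iff.2 hy
  have hlower : log ‖y‖ ≤ regularizedLog c y := by
    rw [log_norm_eq_half_log_norm_sq, regularizedLog]
    gcongr
    exact le_add_of_nonneg_right (by positivity)
  have hupper : regularizedLog c y ≤ regularizedLog 1 y := by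
    unfold regularizedLog
    gcongr
  rw [abs_le]
  constructor
  · linarith [neg_abs_le (log ‖y‖), abs_nonneg (regularizedLog 1 y)]
  · linarith [le_abs_self (regularizedLog 1 y), abs_nonneg (log ‖y‖)]

lemma tendsto_regularizedLog {y : Plane} (hy : y ≠ 0) :
    Tendsto (fun c ↦ regularizedLog c y) atTop (𝓝 (log ‖y‖)) := by
  have := norm_pos_iff.2 hy
  have hlim : Tendsto (fun c : ℝ ↦ ‖y‖ ^ 2 + (c ^ 2)⁻¹) atTop (𝓝 (‖y‖ ^ 2)) := by
    simpa using tendsto_const_nhds.add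
      (tendsto_inv_atTop_zero.comp (tendsto_pow_atTop (α := ℝ) two_ne_zero))
  rw [log_norm_eq_half_log_norm_sq]
  exact (hlim.log (by positivity)).const_mul _

lemma integrable_log_norm_mul (hg : Continuous g) (hgc : HasCompactSupport g) :
    Integrable fun y ↦ log ‖y‖ * g y :=
  (locallyIntegrable_log_norm (by simp)).integrable_smul_right_of_hasCompactSupport hg hgc

lemma tendsto_integral_regularizedLog_mul (hg : Continuous g) (hgc : HasCompactSupport g) :
    Tendsto (fun c ↦ ∫ y, regularizedLog c y * g y) atTop (𝓝 (∫ y, log ‖y‖ * g y)) := by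
  have hae : ∀ᵐ y : Plane, y ≠ 0 := by simp [ae_iff]
  refine tendsto_integral_filter_of_dominated_convergence
    (fun y ↦ (|log ‖y‖| + |regularizedLog 1 y|) * |g y|) ?_ ?_ ?_ ?_
  · filter_upwards [eventually_gt_atTop 0] with c hc
    exact ((contDiff_regularizedLog (n := 0) hc).continuous.mul hg).aestronglyMeasurable
  · filter_upwards [eventually_ge_atTop 1] with c hc
    filter_upwards [hae] with y hy
    rw [norm_mul, norm_eq_abs, norm_eq_abs]
    gcongr
    exact abs_regularizedLog_le hc hy
  · have hreg : Integrable fun y ↦ regularizedLog 1 y * g y :=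
      ((contDiff_regularizedLog (n := 0) one_pos).continuous.mul
        hg).integrable_of_hasCompactSupport hgc.mul_left
    refine ((integrable_log_norm_mul hg hgc).abs.add hreg.abs).congr (.of_forall fun y ↦ ?_)
    simp [abs_mul, add_mul]
  · filter_upwards [hae] with y hy
    exact (tendsto_regularizedLog hy).mul_const _

lemma tendsto_integral_regularizedLog_mul_laplacian (hg : ContDiff ℝ 2 g)
    (hgc : HasCompactSupport g) :
    Tendsto (fun c ↦ ∫ y, regularizedLog c y * Δ g y) atTop (𝓝 (2 * π * g 0)) := by
  have hpeak := tendsto_integral_comp_smul_smul_of_integrable (μ := (volume : Measure Plane))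
    sphericalDensity_nonneg integral_sphericalDensity
    (by simpa using tendsto_norm_pow_mul_sphericalDensity)
    (hg.continuous.integrable_of_hasCompactSupport hgc) hg.continuous.continuousAt
  refine (hpeak.const_mul (2 * π)).congr' ?_
  filter_upwards [eventually_gt_atTop 0] with c hc
  rw [integral_mul_laplacian (contDiff_regularizedLog hc) hg hgc, ← integral_const_mul]
  simp only [laplacian_regularizedLog hc, finrank_euclideanSpace_fin, smul_eq_mul, mul_assoc]

lemma integral_log_norm_mul_laplacian (hg : ContDiff ℝ 2 g) (hgc : HasCompactSupport g) :
    ∫ y, log ‖y‖ * Δ g y = 2 * π * g 0 :=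
  tendsto_nhds_unique (tendsto_integral_regularizedLog_mul (continuous_laplacian hg)
    (hasCompactSupport_laplacian hgc)) (tendsto_integral_regularizedLog_mul_laplacian hg hgc)

end LogKernel

section LogPotential

/-- The logarithmic kernel of the plane, normalised so that `-Δ` of it is the Dirac mass and that it
is nonnegative on the disc of radius `2`, which contains all differences of points of the unit disc.
The junk value at `0` is nonnegative too. -/
noncomputable def logKernel (z : Plane) : ℝ := (2 * π)⁻¹ * (log 2 - log ‖z‖)

/-- The logarithmic potential of a density on the plane, i.e. its convolution with `logKernel`. -/
noncomputable def logPotential (w : Plane → ℝ) : Plane → ℝ :=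
  logKernel ⋆[ContinuousLinearMap.mul ℝ ℝ] w

variable {f g : Plane → ℝ}

lemma logPotential_apply (w : Plane → ℝ) (x : Plane) :
    logPotential w x = ∫ z, logKernel z * w (x - z) := rfl

lemma logKernel_nonneg {z : Plane} (hz : ‖z‖ ≤ 2) : 0 ≤ logKernel z := by
  have hlog : log ‖z‖ ≤ log 2 := by
    rcases eq_or_ne z 0 with rfl | hz₀
    · simpa using log_nonneg one_le_two
    · exact log_le_log (norm_pos_iff.2 hz₀) hz
  have := pi_pos
  exact mul_nonneg (by positivity) (sub_nonneg.2 hlog)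

lemma locallyIntegrable_logKernel : LocallyIntegrable logKernel :=
  (continuous_const.locallyIntegrable.sub (locallyIntegrable_log_norm (by simp))).smul (2 * π)⁻¹

lemma integrable_logKernel_mul (hg : Continuous g) (hgc : HasCompactSupport g) (x : Plane) :
    Integrable fun z ↦ logKernel z * g (x - z) :=
  hgc.convolutionExists_right (ContinuousLinearMap.mul ℝ ℝ) locallyIntegrable_logKernel hg x

lemma logPotential_const_mul (c : ℝ) (w : Plane → ℝ) (x : Plane) :
    logPotential (fun y ↦ c * w y) x = c * logPotential w x := by
  simp only [logPotential_apply, ← integral_const_mul, mul_left_comm]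

lemma contDiff_logPotential (hg : ContDiff ℝ 2 g) (hgc : HasCompactSupport g) :
    ContDiff ℝ 2 (logPotential g) :=
  hgc.contDiff_convolution_right (n := 2) _ locallyIntegrable_logKernel hg

lemma continuous_logPotential (hg : Continuous g) (hgc : HasCompactSupport g) :
    Continuous (logPotential g) :=
  hgc.continuous_convolution_right _ locallyIntegrable_logKernel hg

lemma logPotential_laplacian (hg : ContDiff ℝ 2 g) (hgc : HasCompactSupport g) (x : Plane) :
    logPotential (Δ g) x = -g x := by
  have hG : ContDiff ℝ 2 fun z ↦ g (x + (-1 : ℝ) • z) := by fun_prop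
  have hGc : HasCompactSupport fun z ↦ g (x + (-1 : ℝ) • z) := by
    simpa [sub_eq_add_neg, Function.comp_def] using
      hgc.comp_homeomorph (Homeomorph.subLeft x)
  have hΔ (z : Plane) : Δ g (x - z) = Δ (fun z ↦ g (x + (-1 : ℝ) • z)) z := by
    rw [laplacian_comp_add_smul]
    simp [sub_eq_add_neg]
  have hlog := integrable_log_norm_mul (continuous_laplacian hG) (hasCompactSupport_laplacian hGc)
  have hint := (continuous_laplacian hG).integrable_of_hasCompactSupport (μ := volume)
    (hasCompactSupport_laplacian hGc)
  simp only [logPotential_apply, logKernel, hΔ, mul_assoc, sub_mul]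
  rw [integral_const_mul, integral_sub (hint.const_mul _) hlog, integral_const_mul,
    integral_laplacian_eq_zero hG hGc, integral_log_norm_mul_laplacian hG hGc]
  have := pi_pos
  simp only [neg_one_smul, neg_zero, add_zero, mul_zero, zero_sub]
  field_simp

lemma laplacian_logPotential (hg : ContDiff ℝ 2 g) (hgc : HasCompactSupport g) (x : Plane) :
    Δ (logPotential g) x = -g x := by
  rw [logPotential, laplacian_convolution locallyIntegrable_logKernel hg hgc]
  exact logPotential_laplacian hg hgc x

lemma hasCompactSupport_of_closedBall (hg : ∀ x ∉ closedBall (0 : Plane) 1, g x = 0) :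
    HasCompactSupport g :=
  .intro (isCompact_closedBall 0 1) hg

lemma logPotential_mono (hf : Continuous f) (hf₀ : ∀ x ∉ closedBall (0 : Plane) 1, f x = 0)
    (hg : Continuous g) (hg₀ : ∀ x ∉ closedBall (0 : Plane) 1, g x = 0) (hfg : ∀ x, f x ≤ g x)
    (hx : x ∈ closedBall (0 : Plane) 1) : logPotential f x ≤ logPotential g x := by
  refine integral_mono (integrable_logKernel_mul hf (hasCompactSupport_of_closedBall hf₀) x)
    (integrable_logKernel_mul hg (hasCompactSupport_of_closedBall hg₀) x) fun z ↦ ?_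
  by_cases hxz : x - z ∈ closedBall (0 : Plane) 1
  · rw [mem_closedBall_zero_iff] at hx hxz
    have hz : ‖z‖ ≤ 2 := by
      have := norm_sub_le x (x - z)
      rw [sub_sub_cancel] at this
      linarith
    exact mul_le_mul_of_nonneg_left (hfg _) (logKernel_nonneg hz)
  · simp [hf₀ _ hxz, hg₀ _ hxz]

lemma logPotential_nonneg (hg : Continuous g) (hg₀ : ∀ x ∉ closedBall (0 : Plane) 1, g x = 0)
    (hg_nonneg : ∀ x, 0 ≤ g x) (hx : x ∈ closedBall (0 : Plane) 1) : 0 ≤ logPotential g x := by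
  simpa [logPotential_apply] using
    logPotential_mono continuous_const (fun _ _ ↦ rfl) hg hg₀ hg_nonneg hx

end LogPotential

section TimeDependent

variable {W : ℝ → Plane → ℝ} {s : Set ℝ} {k o : Set Plane} {t : ℝ} {x : Plane} {n : WithTop ℕ∞}

lemma contDiffOn_slice (hW : ContDiffOn ℝ n ↿W (s ×ˢ o)) (ht : t ∈ s) : ContDiffOn ℝ n (W t) o :=
  hW.comp (f := fun y ↦ (t, y)) (by fun_prop) fun _ hy ↦ ⟨ht, hy⟩

lemma contDiff_slice (hW : ContDiffOn ℝ n ↿W (s ×ˢ univ)) (ht : t ∈ s) : ContDiff ℝ n (W t) :=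
  contDiffOn_univ.1 (contDiffOn_slice hW ht)

lemma hasDerivAt_slice (hW : ContDiffOn ℝ 1 ↿W (s ×ˢ o)) (hs : IsOpen s) (ho : IsOpen o)
    (ht : t ∈ s) (hx : x ∈ o) : HasDerivAt (fun r ↦ W r x) (fderiv ℝ ↿W (t, x) (1, 0)) t := by
  have hdiff : DifferentiableAt ℝ ↿W (t, x) :=
    (hW.contDiffAt ((hs.prod ho).mem_nhds ⟨ht, hx⟩)).differentiableAt (by norm_num)
  exact HasFDerivAt.comp_hasDerivAt (f := fun r ↦ (r, x)) t hdiff.hasFDerivAt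
    ((hasDerivAt_id t).prodMk (hasDerivAt_const t x))

lemma continuous_fderiv_slice (hW : ContDiffOn ℝ 1 ↿W (s ×ˢ univ)) (hs : IsOpen s) (ht : t ∈ s) :
    Continuous fun y ↦ fderiv ℝ ↿W (t, y) :=
  (hW.continuousOn_fderiv_of_isOpen (hs.prod isOpen_univ) le_rfl).comp_continuous (by fun_prop)
    fun y ↦ ⟨ht, mem_univ y⟩

lemma deriv_slice_eq (hW : ContDiffOn ℝ 1 ↿W (s ×ˢ univ)) (hs : IsOpen s) (ht : t ∈ s)
    (x : Plane) : deriv (fun r ↦ W r x) t = fderiv ℝ ↿W (t, x) (1, 0) :=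
  (hasDerivAt_slice hW hs isOpen_univ ht (mem_univ x)).deriv

lemma continuous_deriv_slice (hW : ContDiffOn ℝ 1 ↿W (s ×ˢ univ)) (hs : IsOpen s) (ht : t ∈ s) :
    Continuous fun y ↦ deriv (fun r ↦ W r y) t := by
  simp only [deriv_slice_eq hW hs ht]
  exact (continuous_fderiv_slice hW hs ht).clm_apply continuous_const

lemma fderiv_uncurry_eq_zero (hs : IsOpen s) (hk : IsClosed k)
    (hW₀ : ∀ r y, r ∈ s → y ∉ k → W r y = 0) (ht : t ∈ s) (hx : x ∉ k) :
    fderiv ℝ ↿W (t, x) = 0 := by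
  have hzero : ↿W =ᶠ[𝓝 (t, x)] fun _ ↦ 0 := by
    filter_upwards [(hs.prod hk.isOpen_compl).mem_nhds ⟨ht, hx⟩] with p hp
    exact hW₀ p.1 p.2 hp.1 hp.2
  simp [hzero.fderiv_eq]

lemma hasDerivAt_logPotential (hs : IsOpen s) (hk : IsCompact k)
    (hW : ContDiffOn ℝ 1 ↿W (s ×ˢ univ)) (hW₀ : ∀ r y, r ∈ s → y ∉ k → W r y = 0) (ht : t ∈ s)
    (x : Plane) :
    HasDerivAt (fun r ↦ logPotential (W r) x) (logPotential (fun y ↦ deriv (fun r ↦ W r y) t) x)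
      t := by
  have hsupp : HasCompactSupport fun y ↦ fderiv ℝ ↿W (t, y) :=
    .intro hk fun y hy ↦ fderiv_uncurry_eq_zero hs hk.isClosed hW₀ ht hy
  have hparam := (hasFDerivAt_convolution_right_with_param (ContinuousLinearMap.mul ℝ ℝ) hs hk hW₀
    locallyIntegrable_logKernel hW (t, x) ht).comp_hasDerivAt t
      ((hasDerivAt_id t).prodMk (hasDerivAt_const t x))
  refine hparam.congr_deriv ?_
  simp only [deriv_slice_eq hW hs ht]
  exact convolution_precompR_apply (ContinuousLinearMap.mul ℝ ℝ) locallyIntegrable_logKernel hsupp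
    (continuous_fderiv_slice hW hs ht) x ((1 : ℝ), (0 : Plane))

lemma continuousOn_logPotential (hk : IsCompact k) (hW : ContinuousOn ↿W (s ×ˢ univ))
    (hW₀ : ∀ r y, r ∈ s → y ∉ k → W r y = 0) :
    ContinuousOn (fun p : ℝ × Plane ↦ logPotential (W p.1) p.2) (s ×ˢ univ) :=
  continuousOn_convolution_right_with_param (ContinuousLinearMap.mul ℝ ℝ) hk hW₀
    locallyIntegrable_logKernel hW

end TimeDependent

section Cutoff

/-- The primitive, vanishing on `(-∞, 0]`, of `g` times the smooth cutoff `smoothTransition`; it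
replaces the positive part in the `C²` setting. -/
noncomputable def cutoffPrimitive (g : ℝ → ℝ) (v : ℝ) : ℝ := ∫ s in 0..v, g s * smoothTransition s

variable {g : ℝ → ℝ} {v : ℝ}

lemma hasDerivAt_cutoffPrimitive (hg : Continuous g) (v : ℝ) :
    HasDerivAt (cutoffPrimitive g) (g v * smoothTransition v) v :=
  ((hg.mul smoothTransition.continuous).integral_hasStrictDerivAt 0 v).hasDerivAt

lemma hasDerivAt_cutoffPrimitive_one (v : ℝ) :
    HasDerivAt (cutoffPrimitive fun _ ↦ 1) (smoothTransition v) v := by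
  simpa using hasDerivAt_cutoffPrimitive (g := fun _ ↦ 1) continuous_const v

lemma contDiff_cutoffPrimitive (hg : ContDiff ℝ 1 g) : ContDiff ℝ 2 (cutoffPrimitive g) := by
  have hderiv := hasDerivAt_cutoffPrimitive hg.continuous
  rw [← one_add_one_eq_two, contDiff_succ_iff_deriv]
  refine ⟨fun v ↦ (hderiv v).differentiableAt, by simp, ?_⟩
  rw [funext fun v ↦ (hderiv v).deriv]
  exact hg.mul smoothTransition.contDiff

lemma cutoffPrimitive_of_nonpos (hv : v ≤ 0) : cutoffPrimitive g v = 0 := by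
  rw [cutoffPrimitive, intervalIntegral.integral_congr (g := fun _ ↦ (0 : ℝ))]
  · simp
  · intro s hs
    rw [uIcc_of_ge hv] at hs
    simp [smoothTransition.zero_of_nonpos hs.2]

lemma cutoffPrimitive_nonneg (hg : ∀ s, 0 ≤ g s) (v : ℝ) : 0 ≤ cutoffPrimitive g v := by
  rcases le_total v 0 with hv | hv
  · exact (cutoffPrimitive_of_nonpos hv).ge
  · exact intervalIntegral.integral_nonneg hv fun s _ ↦
      mul_nonneg (hg s) (smoothTransition.nonneg s)

lemma sub_one_le_cutoffPrimitive_one (v : ℝ) : v - 1 ≤ cutoffPrimitive (fun _ ↦ 1) v := by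
  have hnonneg := cutoffPrimitive_nonneg (g := fun _ ↦ 1) fun _ ↦ zero_le_one
  rcases le_total v 1 with hv | hv
  · linarith [hnonneg v]
  have hint (a b : ℝ) : IntervalIntegrable (fun s ↦ 1 * smoothTransition s) volume a b :=
    (continuous_const.mul smoothTransition.continuous).intervalIntegrable a b
  have htail : ∫ s in 1..v, 1 * smoothTransition s = v - 1 := by
    rw [intervalIntegral.integral_congr (g := fun _ ↦ (1 : ℝ))]
    · simp
    · intro s hs
      rw [uIcc_of_le hv] at hs
      simp [smoothTransition.one_of_one_le hs.1]
  calc v - 1 = ∫ s in 1..v, 1 * smoothTransition s := htail.symm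
    _ ≤ cutoffPrimitive (fun _ ↦ 1) 1 + ∫ s in 1..v, 1 * smoothTransition s :=
        le_add_of_nonneg_left (hnonneg 1)
    _ = cutoffPrimitive (fun _ ↦ 1) v :=
        intervalIntegral.integral_add_adjacent_intervals (hint 0 1) (hint 1 v)

lemma cutoffPrimitive_le (hg : Continuous g) (hg₀ : ∀ s, 0 ≤ g s) (v : ℝ) :
    cutoffPrimitive g v ≤ smoothTransition v * ∫ s in 0..v, g s := by
  rcases le_total v 0 with hv | hv
  · simp [cutoffPrimitive_of_nonpos hv, smoothTransition.zero_of_nonpos hv]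
  rw [mul_comm, ← intervalIntegral.integral_mul_const]
  refine intervalIntegral.integral_mono_on hv
    ((hg.mul smoothTransition.continuous).intervalIntegrable _ _)
    ((hg.mul continuous_const).intervalIntegrable _ _) fun s hs ↦ ?_
  exact mul_le_mul_of_nonneg_left (smoothTransition.monotone hs.2) (hg₀ s)

end Cutoff

section Harnack

lemma nonneg_of_hasDerivAt_of_isLocalMaxOn_Iic {f : ℝ → ℝ} {f' t : ℝ} (hf : HasDerivAt f f' t)
    (hmax : IsLocalMaxOn f (Iic t) t) : 0 ≤ f' := by
  have hcone : (-1 : ℝ) ∈ posTangentConeAt (Iic t) t :=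
    mem_posTangentConeAt_of_segment_subset <|
      (convex_Iic t).segment_subset self_mem_Iic (by simp)
  simpa using hmax.hasFDerivWithinAt_nonpos hf.hasFDerivAt.hasFDerivWithinAt hcone

/-- Two functions `L` and `W` of time `t ∈ [0, c)` and space, supported in the unit disc, for which
`t L + logPotential W - t` satisfies a maximum principle. In the application `L` is a smooth version
of the positive part of the logarithm of the ratio of the solution to a barrier, and `W` one of the
positive part of their difference. -/
structure IsHarnackPair (c : ℝ) (L W : ℝ → Plane → ℝ) : Prop where
  contDiffOn_left : ContDiffOn ℝ 2 ↿L (Ico 0 c ×ˢ univ)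
  contDiffOn_right : ContDiffOn ℝ 2 ↿W (Ico 0 c ×ˢ univ)
  left_eq_zero : ∀ t x, t ∈ Ico 0 c → x ∉ ball 0 1 → L t x = 0
  right_eq_zero : ∀ t x, t ∈ Ico 0 c → x ∉ ball 0 1 → W t x = 0
  right_nonneg : ∀ t ∈ Ico 0 c, ∀ x, 0 ≤ W t x
  deriv_right_le : ∀ t ∈ Ioo 0 c, ∀ x, deriv (fun s ↦ W s x) t ≤ Δ (L t) x
  right_lt : ∀ t ∈ Ioo 0 c, ∀ x ∈ ball 0 1,
    1 ≤ t * deriv (fun s ↦ L s x) t → W t x < t * Δ (L t) x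

/-- The quantity to which the maximum principle for a Harnack pair is applied. -/
noncomputable def harnackQuantity (L W : ℝ → Plane → ℝ) (t : ℝ) (x : Plane) : ℝ :=
  t * L t x + logPotential (W t) x - logPotential (W 0) x - t

namespace IsHarnackPair

variable {b c t : ℝ} {L W : ℝ → Plane → ℝ} {x : Plane}

lemma hasCompactSupport_left (h : IsHarnackPair c L W) (ht : t ∈ Ico 0 c) :
    HasCompactSupport (L t) :=
  hasCompactSupport_of_closedBall fun _ hx ↦
    h.left_eq_zero t _ ht fun hx' ↦ hx (ball_subset_closedBall hx')

lemma right_eq_zero_of_notMem_closedBall (h : IsHarnackPair c L W) (ht : t ∈ Ico 0 c)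
    (hx : x ∉ closedBall 0 1) : W t x = 0 :=
  h.right_eq_zero t _ ht fun hx' ↦ hx (ball_subset_closedBall hx')

lemma hasCompactSupport_right (h : IsHarnackPair c L W) (ht : t ∈ Ico 0 c) :
    HasCompactSupport (W t) :=
  hasCompactSupport_of_closedBall fun _ hx ↦ h.right_eq_zero_of_notMem_closedBall ht hx

lemma contDiffOn_left_Ioo (h : IsHarnackPair c L W) : ContDiffOn ℝ 1 ↿L (Ioo 0 c ×ˢ univ) :=
  (h.contDiffOn_left.mono (prod_mono_left Ioo_subset_Ico_self)).of_le one_le_two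

lemma contDiffOn_right_Ioo (h : IsHarnackPair c L W) : ContDiffOn ℝ 1 ↿W (Ioo 0 c ×ˢ univ) :=
  (h.contDiffOn_right.mono (prod_mono_left Ioo_subset_Ico_self)).of_le one_le_two

lemma contDiff_logPotential_right (h : IsHarnackPair c L W) (ht : t ∈ Ico 0 c) :
    ContDiff ℝ 2 (logPotential (W t)) :=
  contDiff_logPotential (contDiff_slice h.contDiffOn_right ht) (h.hasCompactSupport_right ht)

lemma logPotential_deriv_right_le (h : IsHarnackPair c L W) (ht : t ∈ Ioo 0 c)
    (hx : x ∈ closedBall 0 1) : logPotential (fun y ↦ deriv (fun s ↦ W s y) t) x ≤ -L t x := by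
  have ht' := Ioo_subset_Ico_self ht
  have hL := contDiff_slice h.contDiffOn_left ht'
  rw [← logPotential_laplacian hL (h.hasCompactSupport_left ht')]
  refine logPotential_mono (continuous_deriv_slice h.contDiffOn_right_Ioo isOpen_Ioo ht)
    (fun y hy ↦ ?_) (continuous_laplacian hL) (fun y hy ↦ ?_) (h.deriv_right_le t ht) hx
  · have hzero : (fun s ↦ W s y) =ᶠ[𝓝 t] fun _ ↦ 0 := by
      filter_upwards [isOpen_Ioo.mem_nhds ht] with s hs
      exact h.right_eq_zero_of_notMem_closedBall (Ioo_subset_Ico_self hs) hy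
    simp [hzero.deriv_eq]
  · have hzero : L t =ᶠ[𝓝 y] fun _ ↦ 0 := by
      filter_upwards [isClosed_closedBall.isOpen_compl.mem_nhds hy] with z hz
      exact h.left_eq_zero t z ht' fun hz' ↦ hz (ball_subset_closedBall hz')
    simpa using (laplacian_congr_nhds hzero).eq_of_nhds

lemma hasDerivAt_harnackQuantity (h : IsHarnackPair c L W) (ht : t ∈ Ioo 0 c) (x : Plane) :
    HasDerivAt (fun s ↦ harnackQuantity L W s x) (L t x + t * deriv (fun s ↦ L s x) t +
      logPotential (fun y ↦ deriv (fun s ↦ W s y) t) x - 1) t := by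
  have hL := (hasDerivAt_slice h.contDiffOn_left_Ioo isOpen_Ioo isOpen_univ ht
    (mem_univ x)).differentiableAt.hasDerivAt
  have hW := hasDerivAt_logPotential isOpen_Ioo (isCompact_closedBall 0 1) h.contDiffOn_right_Ioo
    (fun s y hs hy ↦ h.right_eq_zero_of_notMem_closedBall (Ioo_subset_Ico_self hs) hy) ht x
  refine (((((hasDerivAt_id t).mul hL).add hW).sub_const (logPotential (W 0) x)).sub
    (hasDerivAt_id t)).congr_deriv ?_
  simp

lemma harnackQuantity_eq (t : ℝ) : harnackQuantity L W t =
    (t • L t + logPotential (W t)) - logPotential (W 0) - fun _ ↦ t := rfl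

lemma contDiff_harnackQuantity (h : IsHarnackPair c L W) (ht : t ∈ Ico 0 c) :
    ContDiff ℝ 2 (harnackQuantity L W t) :=
  (((contDiff_const.mul (contDiff_slice h.contDiffOn_left ht)).add
    (h.contDiff_logPotential_right ht)).sub
      (h.contDiff_logPotential_right (left_mem_Ico.2 (ht.1.trans_lt ht.2)))).sub contDiff_const

lemma laplacian_harnackQuantity (h : IsHarnackPair c L W) (ht : t ∈ Ico 0 c) (x : Plane) :
    Δ (harnackQuantity L W t) x = t * Δ (L t) x - W t x + W 0 x := by
  have h0 : 0 ∈ Ico 0 c := left_mem_Ico.2 (ht.1.trans_lt ht.2)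
  have hL : ContDiffAt ℝ 2 (L t) x := (contDiff_slice h.contDiffOn_left ht).contDiffAt
  have hP := (h.contDiff_logPotential_right ht).contDiffAt (x := x)
  have hP₀ := (h.contDiff_logPotential_right h0).contDiffAt (x := x)
  have hL' : ContDiffAt ℝ 2 (t • L t) x := contDiffAt_const.smul hL
  have hLP : ContDiffAt ℝ 2 (t • L t + logPotential (W t)) x := hL'.add hP
  have hLPP : ContDiffAt ℝ 2 (t • L t + logPotential (W t) - logPotential (W 0)) x :=
    hLP.sub hP₀
  rw [harnackQuantity_eq, hLPP.laplacian_sub contDiffAt_const, hLP.laplacian_sub hP₀,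
    hL'.laplacian_add hP, laplacian_smul t hL,
    laplacian_logPotential (contDiff_slice h.contDiffOn_right ht) (h.hasCompactSupport_right ht),
    laplacian_logPotential (contDiff_slice h.contDiffOn_right h0) (h.hasCompactSupport_right h0)]
  simp only [smul_eq_mul, sub_neg_eq_add, laplacian_const, Pi.zero_apply, sub_zero]
  ring

lemma continuousOn_harnackQuantity (h : IsHarnackPair c L W) (hb : b ∈ Ico 0 c) :
    ContinuousOn ↿(harnackQuantity L W) (Icc 0 b ×ˢ univ) := by
  have h0 : 0 ∈ Ico 0 c := left_mem_Ico.2 (hb.1.trans_lt hb.2)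
  have hsub : Icc 0 b ×ˢ univ ⊆ Ico 0 c ×ˢ (univ : Set Plane) :=
    prod_mono_left (Icc_subset_Ico_right hb.2)
  have hpot := continuousOn_logPotential (isCompact_closedBall 0 1)
    (h.contDiffOn_right.continuousOn.mono hsub) fun s y hs hy ↦
      h.right_eq_zero_of_notMem_closedBall (Icc_subset_Ico_right hb.2 hs) hy
  have hpot₀ : Continuous fun p : ℝ × Plane ↦ logPotential (W 0) p.2 :=
    (h.contDiff_logPotential_right h0).continuous.comp continuous_snd
  exact (((continuousOn_fst.mul (h.contDiffOn_left.continuousOn.mono hsub)).add hpot).sub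
    hpot₀.continuousOn).sub continuousOn_fst

lemma harnackQuantity_nonpos (h : IsHarnackPair c L W) (hb : b ∈ Ico 0 c)
    (hx : x ∈ closedBall 0 1) : harnackQuantity L W b x ≤ 0 := by
  have hbmem : b ∈ Icc 0 b := right_mem_Icc.2 hb.1
  obtain ⟨⟨t, y⟩, ⟨ht, hy⟩, hmax⟩ := (isCompact_Icc.prod
    (isCompact_closedBall (0 : Plane) 1)).exists_isMaxOn ⟨(b, x), hbmem, hx⟩
    ((h.continuousOn_harnackQuantity hb).mono (prod_mono_right (subset_univ _)))
  refine (hmax (a := (b, x)) ⟨hbmem, hx⟩).trans ?_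
  change harnackQuantity L W t y ≤ 0
  rcases ht.1.eq_or_lt with rfl | ht₀
  · simp [harnackQuantity]
  exfalso
  have htc : t ∈ Ioo 0 c := ⟨ht₀, ht.2.trans_lt hb.2⟩
  have htime : 1 ≤ t * deriv (fun s ↦ L s y) t := by
    have hle := h.logPotential_deriv_right_le htc hy
    have hmax_time : IsLocalMaxOn (fun s ↦ harnackQuantity L W s y) (Iic t) t := by
      filter_upwards [self_mem_nhdsWithin, mem_nhdsWithin_of_mem_nhds (Ioi_mem_nhds ht₀)]
        with s hst hs
      exact hmax (a := (s, y)) ⟨⟨le_of_lt hs, hst.trans ht.2⟩, hy⟩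
    have hnonneg := nonneg_of_hasDerivAt_of_isLocalMaxOn_Iic
      (h.hasDerivAt_harnackQuantity htc y) hmax_time
    linarith
  have hyball : y ∈ ball 0 1 := by
    by_contra hy'
    have hzero : (fun s ↦ L s y) =ᶠ[𝓝 t] fun _ ↦ 0 := by
      filter_upwards [isOpen_Ioo.mem_nhds htc] with s hs
      exact h.left_eq_zero s y (Ioo_subset_Ico_self hs) hy'
    rw [hzero.deriv_eq] at htime
    norm_num at htime
  have hspace : Δ (harnackQuantity L W t) y ≤ 0 := by
    refine laplacian_nonpos_of_isLocalMax ?_ ?_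
    · exact (h.contDiff_harnackQuantity (Ioo_subset_Ico_self htc)).contDiffAt
    · filter_upwards [isOpen_ball.mem_nhds hyball] with z hz
      exact hmax (a := (t, z)) ⟨ht, ball_subset_closedBall hz⟩
  rw [h.laplacian_harnackQuantity (Ioo_subset_Ico_self htc)] at hspace
  have := h.right_lt t htc y hyball htime
  have := h.right_nonneg 0 (left_mem_Ico.2 (hb.1.trans_lt hb.2)) y
  linarith

lemma mul_left_le (h : IsHarnackPair c L W) (hb : b ∈ Ico 0 c) (hx : x ∈ closedBall 0 1) :
    b * L b x ≤ logPotential (W 0) x + b := by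
  have hquantity := h.harnackQuantity_nonpos hb hx
  have hpot := logPotential_nonneg (contDiff_slice h.contDiffOn_right hb).continuous
    (fun y hy ↦ h.right_eq_zero_of_notMem_closedBall hb hy) (h.right_nonneg b hb) hx
  rw [harnackQuantity] at hquantity
  linarith

end IsHarnackPair

end Harnack

section Poincare

variable {x : Plane}

lemma one_sub_norm_sq_pos (hx : x ∈ ball 0 1) : 0 < 1 - ‖x‖ ^ 2 := by
  rw [mem_ball_zero_iff] at hx
  nlinarith [norm_nonneg x]

lemma poincareH_pos (hx : x ∈ ball 0 1) : 0 < poincareH x := by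
  have := one_sub_norm_sq_pos hx
  unfold poincareH
  positivity

lemma contDiffOn_poincareH {n : WithTop ℕ∞} : ContDiffOn ℝ n poincareH (ball 0 1) :=
  (contDiffOn_const.div (contDiffOn_const.sub (contDiff_norm_sq ℝ).contDiffOn)
    fun _ hx ↦ (one_sub_norm_sq_pos hx).ne').pow 2

lemma four_le_poincareH (hx : x ∈ ball 0 1) : 4 ≤ poincareH x := by
  have := one_sub_norm_sq_pos hx
  rw [poincareH, show (4 : ℝ) = 2 ^ 2 by norm_num]
  gcongr
  rw [le_div_iff₀ this]
  nlinarith [sq_nonneg ‖x‖]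

lemma exists_lt_one_forall_le_poincareH (M : ℝ) :
    ∃ ρ < 1, ∀ x ∈ ball 0 1, ρ ≤ ‖x‖ → M ≤ poincareH x := by
  have hM : 0 < 1 + |M| := by positivity
  refine ⟨1 - (1 + |M|)⁻¹, by simpa using hM, fun x hx hρ ↦ ?_⟩
  have hpos := one_sub_norm_sq_pos hx
  rw [mem_ball_zero_iff] at hx
  have hle : 1 - ‖x‖ ^ 2 ≤ 2 * (1 + |M|)⁻¹ := by nlinarith
  have hbase : 1 + |M| ≤ 2 / (1 - ‖x‖ ^ 2) := by
    rw [le_div_iff₀ hpos]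
    calc (1 + |M|) * (1 - ‖x‖ ^ 2) ≤ (1 + |M|) * (2 * (1 + |M|)⁻¹) := by gcongr
      _ = 2 := by field_simp
  calc M ≤ 1 + |M| := by linarith [le_abs_self M]
    _ ≤ (1 + |M|) ^ 2 := le_self_pow₀ (by linarith [abs_nonneg M]) two_ne_zero
    _ ≤ poincareH x := pow_le_pow_left₀ hM.le hbase 2

lemma log_poincareH (x : Plane) : log (poincareH x) = 2 * log (2 / (1 - ‖x‖ ^ 2)) := by
  rw [poincareH, log_pow]
  norm_num

lemma laplacian_log_poincareH (hx : x ∈ ball 0 1) :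
    Δ (fun y ↦ log (poincareH y)) x = 2 * poincareH x := by
  have hpos := one_sub_norm_sq_pos hx
  have hne : 1 - ‖x‖ ^ 2 ≠ 0 := hpos.ne'
  have hbase (s : ℝ) : HasDerivAt (fun s ↦ 1 - s) (-1) s := by
    simpa using (hasDerivAt_id s).const_sub 1
  have hφ' : ∀ᶠ s in 𝓝 (‖x‖ ^ 2),
      HasDerivAt (fun s ↦ 2 * log (2 / (1 - s))) (2 * (1 - s)⁻¹) s := by
    filter_upwards [(hbase _).continuousAt.eventually_ne hne] with s hs
    refine ((((hasDerivAt_const s (2 : ℝ)).div (hbase s) hs).log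
      (div_ne_zero two_ne_zero hs)).const_mul 2).congr_deriv ?_
    simp only [Pi.div_apply]
    field_simp
    ring
  have hφ'' : HasDerivAt (fun s : ℝ ↦ 2 * (1 - s)⁻¹) (2 * ((1 - ‖x‖ ^ 2) ^ 2)⁻¹) (‖x‖ ^ 2) :=
    (((hbase _).inv hne).const_mul 2).congr_deriv (by simp)
  have hφ : ContDiffAt ℝ 2 (fun s ↦ 2 * log (2 / (1 - s))) (‖x‖ ^ 2) :=
    contDiffAt_const.mul ((contDiffAt_const.div (contDiffAt_const.sub contDiffAt_id) hne).log
      (div_ne_zero two_ne_zero hne))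
  simp only [log_poincareH]
  rw [laplacian_comp (contDiff_norm_sq ℝ).contDiffAt hφ hφ' hφ'', laplacian_norm_sq,
    norm_gradient_norm_sq, finrank_euclideanSpace_fin, poincareH]
  push_cast
  field_simp
  ring

end Poincare

section Flow

/-- A positive `C²` solution `u` of the Ricci flow equation `∂ₜ u = Δ log u` on the open unit disc
for times in `[0, T)`. Time is the first argument of `u`. -/
structure IsDiscFlow (T : ℝ) (u : ℝ → Plane → ℝ) : Prop where
  contDiffOn : ContDiffOn ℝ 2 ↿u (Ico 0 T ×ˢ ball 0 1)
  pos : ∀ t ∈ Ico 0 T, ∀ x ∈ ball 0 1, 0 < u t x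
  deriv_eq : ∀ t ∈ Ioo 0 T, ∀ x ∈ ball 0 1, deriv (fun s ↦ u s x) t = Δ (fun y ↦ log (u t y)) x

/-- The parabolic rescaling of `u` that moves the disc of radius `r` about `x₀` to the unit disc and
the time interval `[a, a + τ]` to `[0, 1]`. -/
noncomputable def parabolicRescale (x₀ : Plane) (r a τ : ℝ) (u : ℝ → Plane → ℝ) (s : ℝ)
    (x : Plane) : ℝ :=
  r ^ 2 / τ * u (a + τ * s) (x₀ + r • x)

lemma add_smul_mem_unitBall {x₀ x : Plane} {r : ℝ} (hr : 0 < r) (hx₀ : ‖x₀‖ + r ≤ 1)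
    (hx : x ∈ ball 0 1) : x₀ + r • x ∈ ball (0 : Plane) 1 := by
  rw [mem_ball_zero_iff] at hx ⊢
  calc ‖x₀ + r • x‖ ≤ ‖x₀‖ + r * ‖x‖ := by
        simpa [norm_smul, abs_of_pos hr] using norm_add_le x₀ (r • x)
    _ < ‖x₀‖ + r * 1 := by gcongr
    _ ≤ 1 := by linarith

lemma add_mul_mem_Ico {T T' a τ s : ℝ} (ha : 0 ≤ a) (hτ : 0 < τ) (hT : a + τ * T' ≤ T)
    (hs : s ∈ Ico 0 T') : a + τ * s ∈ Ico 0 T :=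
  ⟨add_nonneg ha (mul_nonneg hτ.le hs.1),
    (add_lt_add_right (mul_lt_mul_of_pos_left hs.2 hτ) a).trans_le hT⟩

namespace IsDiscFlow

variable {T T' : ℝ} {u : ℝ → Plane → ℝ} {t r a τ : ℝ} {x₀ x : Plane}

lemma contDiffAt_log (hu : IsDiscFlow T u) (ht : t ∈ Ico 0 T) (hx : x ∈ ball 0 1) :
    ContDiffAt ℝ 2 (fun y ↦ log (u t y)) x :=
  ((contDiffOn_slice hu.contDiffOn ht).contDiffAt (isOpen_ball.mem_nhds hx)).log
    (hu.pos t ht x hx).ne'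

lemma hasDerivAt (hu : IsDiscFlow T u) (ht : t ∈ Ioo 0 T) (hx : x ∈ ball 0 1) :
    HasDerivAt (fun s ↦ u s x) (Δ (fun y ↦ log (u t y)) x) t := by
  rw [← hu.deriv_eq t ht x hx]
  exact (hasDerivAt_slice ((hu.contDiffOn.mono (prod_mono_left Ioo_subset_Ico_self)).of_le
    one_le_two) isOpen_Ioo isOpen_ball ht hx).differentiableAt.hasDerivAt

lemma rescale (hu : IsDiscFlow T u) (hr : 0 < r) (hx₀ : ‖x₀‖ + r ≤ 1) (ha : 0 ≤ a) (hτ : 0 < τ)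
    (hT : a + τ * T' ≤ T) : IsDiscFlow T' (parabolicRescale x₀ r a τ u) := by
  have hspace (x : Plane) (hx : x ∈ ball 0 1) := add_smul_mem_unitBall hr hx₀ hx
  have htime (s : ℝ) (hs : s ∈ Ico 0 T') := add_mul_mem_Ico ha hτ hT hs
  have hcoeff : 0 < r ^ 2 / τ := by positivity
  refine ⟨?_, fun s hs x hx ↦ mul_pos hcoeff (hu.pos _ (htime s hs) _ (hspace x hx)),
    fun s hs x hx ↦ ?_⟩
  · exact contDiffOn_const.mul (hu.contDiffOn.comp
      (f := fun p : ℝ × Plane ↦ (a + τ * p.1, x₀ + r • p.2)) (by fun_prop)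
      fun p hp ↦ ⟨htime _ hp.1, hspace _ hp.2⟩)
  · have hs' : a + τ * s ∈ Ioo 0 T :=
      ⟨add_pos_of_nonneg_of_pos ha (mul_pos hτ hs.1), (htime s (Ioo_subset_Ico_self hs)).2⟩
    have hlog : (fun y ↦ log (parabolicRescale x₀ r a τ u s y)) =ᶠ[𝓝 x]
        (fun _ ↦ log (r ^ 2 / τ)) + fun y ↦ log (u (a + τ * s) (x₀ + r • y)) := by
      filter_upwards [isOpen_ball.mem_nhds hx] with y hy
      exact log_mul hcoeff.ne' (hu.pos _ (htime s (Ioo_subset_Ico_self hs)) _ (hspace y hy)).ne'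
    have hsmooth : ContDiffAt ℝ 2 (fun y ↦ log (u (a + τ * s) (x₀ + r • y))) x :=
      (hu.contDiffAt_log (Ioo_subset_Ico_self hs') (hspace x hx)).comp x
        (f := fun y ↦ x₀ + r • y) (by fun_prop)
    have hderiv : HasDerivAt (fun s ↦ a + τ * s) τ s := by
      simpa using ((hasDerivAt_id s).const_mul τ).const_add a
    rw [(laplacian_congr_nhds hlog).eq_of_nhds, contDiffAt_const.laplacian_add hsmooth,
      laplacian_const, Pi.zero_apply, zero_add,
      laplacian_comp_add_smul fun y ↦ log (u (a + τ * s) y)]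
    refine (((hu.hasDerivAt hs' (hspace x hx)).comp s hderiv).const_mul (r ^ 2 / τ)).deriv.trans ?_
    field_simp

end IsDiscFlow

end Flow

section Barrier

lemma contDiffOn_indicator {E : Type*} [NormedAddCommGroup E] [NormedSpace ℝ E]
    {n : WithTop ℕ∞} {s : Set ℝ} {U K : Set E} {Φ : ℝ → E → ℝ} (hU : IsOpen U) (hK : IsClosed K)
    (hKU : K ⊆ U) (hΦ : ContDiffOn ℝ n ↿Φ (s ×ˢ U)) (hzero : ∀ t ∈ s, ∀ x ∈ U \ K, Φ t x = 0) :
    ContDiffOn ℝ n ↿(fun t ↦ U.indicator (Φ t)) (s ×ˢ univ) := by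
  rintro ⟨t, x⟩ ⟨ht, -⟩
  have hnhds {V : Set E} (hV : IsOpen V) (hx : x ∈ V) : s ×ˢ V ∈ 𝓝[s ×ˢ univ] (t, x) := by
    rw [nhdsWithin_prod_eq, nhdsWithin_univ]
    exact prod_mem_prod self_mem_nhdsWithin (hV.mem_nhds hx)
  by_cases hx : x ∈ U
  · refine ContDiffWithinAt.mono_of_mem_nhdsWithin ?_ (hnhds hU hx)
    exact (hΦ (t, x) ⟨ht, hx⟩).congr (fun p hp ↦ indicator_of_mem hp.2 _) (indicator_of_mem hx _)
  · have hxK : x ∈ Kᶜ := fun h ↦ hx (hKU h)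
    have hzero' : ∀ p ∈ s ×ˢ Kᶜ, U.indicator (Φ p.1) p.2 = 0 := fun p hp ↦ by
      by_cases hpU : p.2 ∈ U
      · rw [indicator_of_mem hpU, hzero p.1 hp.1 p.2 ⟨hpU, hp.2⟩]
      · exact indicator_of_notMem hpU _
    refine ContDiffWithinAt.mono_of_mem_nhdsWithin ?_ (hnhds hK.isOpen_compl hxK)
    exact contDiffWithinAt_const.congr hzero' (hzero' (t, x) ⟨ht, hxK⟩)

/-- The solution `(α + 2t) h̃` of the Ricci flow equation on the unit disc that expands from `α`
times the Poincaré metric. -/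
noncomputable def barrier (α t : ℝ) (x : Plane) : ℝ := (α + 2 * t) * poincareH x

/-- The logarithm of the ratio of `u` to the barrier. -/
noncomputable def logRatio (α : ℝ) (u : ℝ → Plane → ℝ) (t : ℝ) (x : Plane) : ℝ :=
  log (u t x / barrier α t x)

/-- A `C²` substitute for the positive part of `logRatio`, extended by zero outside the disc. -/
noncomputable def logExcess (α : ℝ) (u : ℝ → Plane → ℝ) (t : ℝ) : Plane → ℝ :=
  (ball 0 1).indicator fun x ↦ cutoffPrimitive (fun _ ↦ 1) (logRatio α u t x)

/-- A `C²` substitute for the positive part of `u - barrier`, extended by zero outside the disc. -/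
noncomputable def excess (α : ℝ) (u : ℝ → Plane → ℝ) (t : ℝ) : Plane → ℝ :=
  (ball 0 1).indicator fun x ↦ barrier α t x * cutoffPrimitive rexp (logRatio α u t x)

variable {T α M t b : ℝ} {u : ℝ → Plane → ℝ} {x : Plane}

lemma barrier_pos (hα : 0 < α) (ht : 0 ≤ t) (hx : x ∈ ball 0 1) : 0 < barrier α t x :=
  mul_pos (by positivity) (poincareH_pos hx)

lemma hasDerivAt_barrier (α t : ℝ) (x : Plane) :
    HasDerivAt (fun s ↦ barrier α s x) (2 * poincareH x) t :=
  ((((hasDerivAt_id t).const_mul 2).const_add α).mul_const (poincareH x)).congr_deriv (by simp)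

lemma logExcess_of_notMem (hx : x ∉ ball 0 1) : logExcess α u t x = 0 := indicator_of_notMem hx _

lemma excess_of_notMem (hx : x ∉ ball 0 1) : excess α u t x = 0 := indicator_of_notMem hx _

lemma logExcess_of_mem (hx : x ∈ ball 0 1) :
    logExcess α u t x = cutoffPrimitive (fun _ ↦ 1) (logRatio α u t x) := indicator_of_mem hx _

lemma excess_of_mem (hx : x ∈ ball 0 1) :
    excess α u t x = barrier α t x * cutoffPrimitive rexp (logRatio α u t x) :=
  indicator_of_mem hx _

lemma excess_nonneg (hα : 0 < α) (ht : 0 ≤ t) (x : Plane) : 0 ≤ excess α u t x :=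
  indicator_nonneg (fun _ hx ↦ mul_nonneg (barrier_pos hα ht hx).le
    (cutoffPrimitive_nonneg (fun _ ↦ (exp_pos _).le) _)) x

lemma cutoffPrimitive_exp_le (v : ℝ) :
    cutoffPrimitive rexp v ≤ smoothTransition v * (exp v - 1) := by
  simpa [integral_exp] using cutoffPrimitive_le continuous_exp (fun s ↦ (exp_pos s).le) v

namespace IsDiscFlow

lemma barrier_mul_exp_logRatio (hu : IsDiscFlow T u) (hα : 0 < α) (ht : t ∈ Ico 0 T)
    (hx : x ∈ ball 0 1) : barrier α t x * exp (logRatio α u t x) = u t x := by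
  have hbarrier := barrier_pos hα ht.1 hx
  rw [logRatio, exp_log (div_pos (hu.pos t ht x hx) hbarrier), mul_div_cancel₀ _ hbarrier.ne']

lemma contDiffOn_barrier {n : WithTop ℕ∞} :
    ContDiffOn ℝ n ↿(barrier α) (Ico 0 T ×ˢ ball 0 1) :=
  ContDiffOn.mul (f := fun p : ℝ × Plane ↦ α + 2 * p.1) (by fun_prop)
    (contDiffOn_poincareH.comp contDiffOn_snd fun _ hp ↦ hp.2)

lemma contDiffOn_logRatio (hu : IsDiscFlow T u) (hα : 0 < α) :
    ContDiffOn ℝ 2 ↿(logRatio α u) (Ico 0 T ×ˢ ball 0 1) := by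
  have hne : ∀ p ∈ Ico 0 T ×ˢ ball 0 1, (↿(barrier α) : ℝ × Plane → ℝ) p ≠ 0 :=
    fun p hp ↦ (barrier_pos hα hp.1.1 hp.2).ne'
  exact (hu.contDiffOn.div contDiffOn_barrier hne).log
    fun p hp ↦ div_ne_zero (hu.pos _ hp.1 _ hp.2).ne' (hne p hp)

lemma exists_forall_logRatio_nonpos (hu : IsDiscFlow T u)
    (hM : ∀ t ∈ Ico 0 T, ∀ x ∈ ball 0 1, u t x ≤ M) (hα : 0 < α) :
    ∃ ρ < 1, ∀ t ∈ Ico 0 T, ∀ x ∈ ball 0 1 \ closedBall 0 ρ, logRatio α u t x ≤ 0 := by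
  obtain ⟨ρ, hρ, hle⟩ := exists_lt_one_forall_le_poincareH (M / α)
  refine ⟨ρ, hρ, fun t ht x ⟨hx, hxρ⟩ ↦ ?_⟩
  rw [mem_closedBall_zero_iff, not_le] at hxρ
  have hbarrier := barrier_pos hα ht.1 hx
  refine log_nonpos (div_pos (hu.pos t ht x hx) hbarrier).le ((div_le_one hbarrier).2 ?_)
  calc u t x ≤ M := hM t ht x hx
    _ ≤ α * poincareH x := (div_le_iff₀' hα).1 (hle x hx hxρ.le)
    _ ≤ barrier α t x :=
      mul_le_mul_of_nonneg_right (by linarith [ht.1]) (poincareH_pos hx).le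

lemma contDiffOn_logExcess (hu : IsDiscFlow T u) (hM : ∀ t ∈ Ico 0 T, ∀ x ∈ ball 0 1, u t x ≤ M)
    (hα : 0 < α) : ContDiffOn ℝ 2 ↿(logExcess α u) (Ico 0 T ×ˢ univ) := by
  obtain ⟨ρ, hρ, hle⟩ := hu.exists_forall_logRatio_nonpos hM hα
  exact contDiffOn_indicator isOpen_ball isClosed_closedBall (closedBall_subset_ball hρ)
    ((contDiff_cutoffPrimitive contDiff_const).comp_contDiffOn (hu.contDiffOn_logRatio hα))
    fun t ht x hx ↦ cutoffPrimitive_of_nonpos (hle t ht x hx)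

lemma contDiffOn_excess (hu : IsDiscFlow T u) (hM : ∀ t ∈ Ico 0 T, ∀ x ∈ ball 0 1, u t x ≤ M)
    (hα : 0 < α) : ContDiffOn ℝ 2 ↿(excess α u) (Ico 0 T ×ˢ univ) := by
  obtain ⟨ρ, hρ, hle⟩ := hu.exists_forall_logRatio_nonpos hM hα
  refine contDiffOn_indicator isOpen_ball isClosed_closedBall (closedBall_subset_ball hρ)
    (contDiffOn_barrier.mul ((contDiff_cutoffPrimitive contDiff_exp).comp_contDiffOn
      (hu.contDiffOn_logRatio hα))) fun t ht x hx ↦ ?_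
  rw [cutoffPrimitive_of_nonpos (hle t ht x hx), mul_zero]

lemma laplacian_logExcess_of_notMem (hu : IsDiscFlow T u)
    (hM : ∀ t ∈ Ico 0 T, ∀ x ∈ ball 0 1, u t x ≤ M) (hα : 0 < α) (ht : t ∈ Ico 0 T)
    (hx : x ∉ ball 0 1) : Δ (logExcess α u t) x = 0 := by
  obtain ⟨ρ, hρ, hle⟩ := hu.exists_forall_logRatio_nonpos hM hα
  have hxρ : x ∈ (closedBall 0 ρ)ᶜ := fun h ↦ hx (closedBall_subset_ball hρ h)
  have hzero : logExcess α u t =ᶠ[𝓝 x] fun _ ↦ 0 := by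
    filter_upwards [isClosed_closedBall.isOpen_compl.mem_nhds hxρ] with y hy
    by_cases hyball : y ∈ ball 0 1
    · rw [logExcess_of_mem hyball, cutoffPrimitive_of_nonpos (hle t ht y ⟨hyball, hy⟩)]
    · exact logExcess_of_notMem hyball
  simpa using (laplacian_congr_nhds hzero).eq_of_nhds

lemma laplacian_logRatio (hu : IsDiscFlow T u) (hα : 0 < α) (ht : t ∈ Ico 0 T)
    (hx : x ∈ ball 0 1) :
    Δ (logRatio α u t) x = Δ (fun y ↦ log (u t y)) x - 2 * poincareH x := by
  have hcoeff : 0 < α + 2 * t := by linarith [ht.1]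
  have hlog : logRatio α u t =ᶠ[𝓝 x] ((fun y ↦ log (u t y)) - fun _ ↦ log (α + 2 * t)) -
      fun y ↦ log (poincareH y) := by
    filter_upwards [isOpen_ball.mem_nhds hx] with y hy
    have hpoincare := poincareH_pos hy
    simp only [Pi.sub_apply]
    rw [logRatio, log_div (hu.pos t ht y hy).ne' (barrier_pos hα ht.1 hy).ne', barrier,
      log_mul hcoeff.ne' hpoincare.ne', sub_sub]
  have hlogu := hu.contDiffAt_log ht hx
  have hlogα : ContDiffAt ℝ 2 (fun _ : Plane ↦ log (α + 2 * t)) x := contDiffAt_const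
  have hlogh : ContDiffAt ℝ 2 (fun y ↦ log (poincareH y)) x :=
    (contDiffOn_poincareH.contDiffAt (isOpen_ball.mem_nhds hx)).log (poincareH_pos hx).ne'
  have hdiff : ContDiffAt ℝ 2 ((fun y ↦ log (u t y)) - fun _ ↦ log (α + 2 * t)) x :=
    hlogu.sub hlogα
  rw [(laplacian_congr_nhds hlog).eq_of_nhds, hdiff.laplacian_sub hlogh, hlogu.laplacian_sub hlogα,
    laplacian_const, Pi.zero_apply, sub_zero, laplacian_log_poincareH hx]

lemma le_laplacian_logExcess (hu : IsDiscFlow T u) (hα : 0 < α) (ht : t ∈ Ico 0 T)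
    (hx : x ∈ ball 0 1) : smoothTransition (logRatio α u t x) *
      (Δ (fun y ↦ log (u t y)) x - 2 * poincareH x) ≤ Δ (logExcess α u t) x := by
  have hlocal : logExcess α u t =ᶠ[𝓝 x]
      fun y ↦ cutoffPrimitive (fun _ ↦ 1) (logRatio α u t y) := by
    filter_upwards [isOpen_ball.mem_nhds hx] with y hy using logExcess_of_mem hy
  have hratio : ContDiffAt ℝ 2 (logRatio α u t) x :=
    (contDiffOn_slice (hu.contDiffOn_logRatio hα) ht).contDiffAt (isOpen_ball.mem_nhds hx)
  rw [(laplacian_congr_nhds hlocal).eq_of_nhds,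
    laplacian_comp hratio (contDiff_cutoffPrimitive contDiff_const).contDiffAt
      (.of_forall hasDerivAt_cutoffPrimitive_one)
      (smoothTransition.contDiffAt (n := 1).differentiableAt one_ne_zero).hasDerivAt,
    hu.laplacian_logRatio hα ht hx]
  exact le_add_of_nonneg_right (mul_nonneg smoothTransition.monotone.deriv_nonneg (sq_nonneg _))

lemma hasDerivAt_logRatio (hu : IsDiscFlow T u) (hα : 0 < α) (ht : t ∈ Ioo 0 T)
    (hx : x ∈ ball 0 1) : HasDerivAt (fun s ↦ logRatio α u s x)
      ((Δ (fun y ↦ log (u t y)) x - 2 * poincareH x * exp (logRatio α u t x)) / u t x) t := by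
  have hpos := hu.pos t (Ioo_subset_Ico_self ht) x hx
  have hbarrier := barrier_pos hα ht.1.le hx
  refine (((hu.hasDerivAt ht hx).div (hasDerivAt_barrier α t x) hbarrier.ne').log
    (div_pos hpos hbarrier).ne').congr_deriv ?_
  rw [logRatio, exp_log (div_pos hpos hbarrier)]
  simp only [Pi.div_apply]
  field_simp

lemma hasDerivAt_logExcess (hu : IsDiscFlow T u) (hα : 0 < α) (ht : t ∈ Ioo 0 T)
    (hx : x ∈ ball 0 1) : HasDerivAt (fun s ↦ logExcess α u s x)
      (smoothTransition (logRatio α u t x) *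
        ((Δ (fun y ↦ log (u t y)) x - 2 * poincareH x * exp (logRatio α u t x)) / u t x)) t := by
  simp only [logExcess_of_mem hx]
  exact (hasDerivAt_cutoffPrimitive_one _).comp t (hu.hasDerivAt_logRatio hα ht hx)

lemma hasDerivAt_excess (hu : IsDiscFlow T u) (hα : 0 < α) (ht : t ∈ Ioo 0 T)
    (hx : x ∈ ball 0 1) : HasDerivAt (fun s ↦ excess α u s x)
      (2 * poincareH x * cutoffPrimitive rexp (logRatio α u t x) +
        smoothTransition (logRatio α u t x) *
          (Δ (fun y ↦ log (u t y)) x - 2 * poincareH x * exp (logRatio α u t x))) t := by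
  simp only [excess_of_mem hx]
  refine ((hasDerivAt_barrier α t x).mul ((hasDerivAt_cutoffPrimitive continuous_exp _).comp t
    (hu.hasDerivAt_logRatio hα ht hx))).congr_deriv ?_
  have hpos := (hu.pos t (Ioo_subset_Ico_self ht) x hx).ne'
  simp only [Function.comp_apply]
  rw [← mul_assoc (barrier α t x), ← mul_assoc (barrier α t x),
    hu.barrier_mul_exp_logRatio hα (Ioo_subset_Ico_self ht) hx]
  field_simp

lemma deriv_excess_le (hu : IsDiscFlow T u) (hα : 0 < α) (ht : t ∈ Ioo 0 T) (hx : x ∈ ball 0 1) :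
    deriv (fun s ↦ excess α u s x) t ≤ Δ (logExcess α u t) x := by
  refine le_trans ?_ (hu.le_laplacian_logExcess hα (Ioo_subset_Ico_self ht) hx)
  rw [(hu.hasDerivAt_excess hα ht hx).deriv]
  have := mul_le_mul_of_nonneg_left (cutoffPrimitive_exp_le (logRatio α u t x))
    (poincareH_pos hx).le
  linarith

lemma excess_le (hu : IsDiscFlow T u) (hα : 0 < α) (ht : t ∈ Ico 0 T) (hx : x ∈ ball 0 1) :
    excess α u t x ≤ smoothTransition (logRatio α u t x) * (u t x - barrier α t x) := by
  rw [excess_of_mem hx]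
  calc barrier α t x * cutoffPrimitive rexp (logRatio α u t x)
    _ ≤ barrier α t x * (smoothTransition (logRatio α u t x) * (exp (logRatio α u t x) - 1)) :=
        mul_le_mul_of_nonneg_left (cutoffPrimitive_exp_le _) (barrier_pos hα ht.1 hx).le
    _ = smoothTransition (logRatio α u t x) *
          (barrier α t x * exp (logRatio α u t x) - barrier α t x) := by ring
    _ = _ := by rw [hu.barrier_mul_exp_logRatio hα ht hx]

lemma excess_le_max (hu : IsDiscFlow T u) (hα : 0 < α) (ht : t ∈ Ico 0 T) (hx : x ∈ ball 0 1) :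
    excess α u t x ≤ max (u t x - barrier α t x) 0 := by
  refine (hu.excess_le hα ht hx).trans ?_
  calc _ ≤ smoothTransition (logRatio α u t x) * max (u t x - barrier α t x) 0 :=
        mul_le_mul_of_nonneg_left (le_max_left _ _) (smoothTransition.nonneg _)
    _ ≤ _ := mul_le_of_le_one_left (le_max_right _ _) (smoothTransition.le_one _)

lemma excess_lt (hu : IsDiscFlow T u) (hα : 0 < α) (ht : t ∈ Ioo 0 T) (hx : x ∈ ball 0 1)
    (hderiv : 1 ≤ t * deriv (fun s ↦ logExcess α u s x) t) :
    excess α u t x < t * Δ (logExcess α u t) x := by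
  have ht' := Ioo_subset_Ico_self ht
  have hpos := hu.pos t ht' x hx
  have hbarrier := barrier_pos hα ht.1.le hx
  rw [(hu.hasDerivAt_logExcess hα ht hx).deriv] at hderiv
  have hratio : 0 ≤ logRatio α u t x := by
    by_contra! hneg
    rw [smoothTransition.zero_of_nonpos hneg.le] at hderiv
    norm_num at hderiv
  calc excess α u t x ≤ max (u t x - barrier α t x) 0 := hu.excess_le_max hα ht' hx
    _ < u t x := max_lt (sub_lt_self _ hbarrier) hpos
    _ ≤ u t x * (t * (smoothTransition (logRatio α u t x) * ((Δ (fun y ↦ log (u t y)) x -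
          2 * poincareH x * exp (logRatio α u t x)) / u t x))) :=
        le_mul_of_one_le_right hpos.le hderiv
    _ = t * (smoothTransition (logRatio α u t x) *
          (Δ (fun y ↦ log (u t y)) x - 2 * poincareH x * exp (logRatio α u t x))) := by
        field_simp
    _ ≤ t * (smoothTransition (logRatio α u t x) *
          (Δ (fun y ↦ log (u t y)) x - 2 * poincareH x)) := by
        have := smoothTransition.nonneg (logRatio α u t x)
        have := ht.1
        have := poincareH_pos hx
        gcongr _ * (_ * (_ - ?_))
        exact le_mul_of_one_le_right (by positivity) (one_le_exp hratio)
    _ ≤ t * Δ (logExcess α u t) x :=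
        mul_le_mul_of_nonneg_left (hu.le_laplacian_logExcess hα ht' hx) ht.1.le

lemma isHarnackPair (hu : IsDiscFlow T u) (hM : ∀ t ∈ Ico 0 T, ∀ x ∈ ball 0 1, u t x ≤ M)
    (hα : 0 < α) : IsHarnackPair T (logExcess α u) (excess α u) where
  contDiffOn_left := hu.contDiffOn_logExcess hM hα
  contDiffOn_right := hu.contDiffOn_excess hM hα
  left_eq_zero _ _ _ hx := logExcess_of_notMem hx
  right_eq_zero _ _ _ hx := excess_of_notMem hx
  right_nonneg t ht x := excess_nonneg hα ht.1 x
  deriv_right_le t ht x := by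
    by_cases hx : x ∈ ball 0 1
    · exact hu.deriv_excess_le hα ht hx
    · rw [hu.laplacian_logExcess_of_notMem hM hα (Ioo_subset_Ico_self ht) hx]
      simp [excess_of_notMem hx]
  right_lt t ht x hx := hu.excess_lt hα ht hx

lemma le_barrier_mul_exp (hu : IsDiscFlow T u) (hM : ∀ t ∈ Ico 0 T, ∀ x ∈ ball 0 1, u t x ≤ M)
    (hα : 0 < α) (hb : b ∈ Ioo 0 T) (hx : x ∈ ball 0 1) :
    u b x ≤ barrier α b x * exp (logPotential (excess α u 0) x / b + 2) := by
  have hb' := Ioo_subset_Ico_self hb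
  rw [← hu.barrier_mul_exp_logRatio hα hb' hx]
  refine mul_le_mul_of_nonneg_left (exp_le_exp.2 ?_) (barrier_pos hα hb'.1 hx).le
  have hharnack := (hu.isHarnackPair hM hα).mul_left_le hb' (ball_subset_closedBall hx)
  rw [logExcess_of_mem hx] at hharnack
  calc logRatio α u b x ≤ cutoffPrimitive (fun _ ↦ 1) (logRatio α u b x) + 1 :=
        sub_le_iff_le_add.1 (sub_one_le_cutoffPrimitive_one _)
    _ ≤ (logPotential (excess α u 0) x + b) / b + 1 := by
        gcongr
        rwa [le_div_iff₀' hb.1]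
    _ = logPotential (excess α u 0) x / b + 2 := by
        have := hb.1.ne'
        field_simp
        ring

end IsDiscFlow

end Barrier

section AffineChange

variable {E : Type*} [NormedAddCommGroup E] [NormedSpace ℝ E] [FiniteDimensional ℝ E]
  [MeasurableSpace E] [BorelSpace E] {μ : Measure E} [μ.IsAddHaarMeasure] {f : E → ℝ}
  {s t : Set E} {c : E} {r : ℝ}

lemma integrableOn_comp_add_smul (hf : IntegrableOn f t μ) (hs : MeasurableSet s)
    (ht : MeasurableSet t) (hr : r ≠ 0) (hst : MapsTo (fun x ↦ c + r • x) s t) :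
    IntegrableOn (fun x ↦ f (c + r • x)) s μ :=
  (((hf.integrable_indicator ht).comp_add_left c).comp_smul hr).integrableOn.congr_fun
    (fun _ hx ↦ indicator_of_mem (hst hx) f) hs

lemma setIntegral_comp_add_smul_le (hf : IntegrableOn f t μ) (hf₀ : ∀ x, 0 ≤ f x)
    (hs : MeasurableSet s) (ht : MeasurableSet t) (hr : 0 < r)
    (hst : MapsTo (fun x ↦ c + r • x) s t) :
    ∫ x in s, f (c + r • x) ∂μ ≤ (r ^ Module.finrank ℝ E)⁻¹ * ∫ x in t, f x ∂μ := by
  have hind := hf.integrable_indicator ht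
  calc ∫ x in s, f (c + r • x) ∂μ = ∫ x in s, t.indicator f (c + r • x) ∂μ :=
        setIntegral_congr_fun hs fun x hx ↦ (indicator_of_mem (hst hx) f).symm
    _ ≤ ∫ x, t.indicator f (c + r • x) ∂μ :=
        setIntegral_le_integral ((hind.comp_add_left c).comp_smul hr.ne')
          (.of_forall fun x ↦ indicator_nonneg (fun y _ ↦ hf₀ y) _)
    _ = (r ^ Module.finrank ℝ E)⁻¹ * ∫ x, t.indicator f x ∂μ := by
        rw [Measure.integral_comp_smul_of_nonneg μ (fun x ↦ t.indicator f (c + x)) r (hR := hr.le),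
          integral_add_left_eq_self, smul_eq_mul]
    _ = _ := by rw [integral_indicator ht]

end AffineChange

section ExponentialIntegrability

/-- The tangent lines of the exponential at `∫ G f` are evaluated at `G` with weight `f` and at `0`
with the missing mass `1 - ∫ f`. -/
lemma exp_integral_mul_le {X : Type*} [MeasurableSpace X] {μ : Measure X} {f G : X → ℝ}
    (hf : Integrable f μ) (hf₀ : ∀ z, 0 ≤ f z) (hf₁ : ∫ z, f z ∂μ ≤ 1)
    (hG : Integrable (fun z ↦ G z * f z) μ) (hexp : Integrable (fun z ↦ exp (G z) * f z) μ) :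
    exp (∫ z, G z * f z ∂μ) ≤ 1 - ∫ z, f z ∂μ + ∫ z, exp (G z) * f z ∂μ := by
  set A := ∫ z, G z * f z ∂μ
  have htangent (s : ℝ) : exp A * (1 - A) + exp A * s ≤ exp s := by
    calc exp A * (1 - A) + exp A * s = exp A * (s - A + 1) := by ring
      _ ≤ exp A * exp (s - A) := by gcongr; exact add_one_le_exp _
      _ = exp s := by rw [← exp_add, add_sub_cancel]
  have hmain : exp A * (1 - A) * ∫ z, f z ∂μ + exp A * A ≤ ∫ z, exp (G z) * f z ∂μ := by
    rw [← integral_const_mul, ← integral_const_mul,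
      ← integral_add (hf.const_mul _) (hG.const_mul _)]
    refine integral_mono ((hf.const_mul _).add (hG.const_mul _)) hexp fun z ↦ ?_
    calc _ = (exp A * (1 - A) + exp A * G z) * f z := by ring
      _ ≤ exp (G z) * f z := mul_le_mul_of_nonneg_right (htangent _) (hf₀ z)
  have hmissing : (1 - ∫ z, f z ∂μ) * (exp A * (1 - A)) ≤ 1 - ∫ z, f z ∂μ :=
    mul_le_of_le_one_right (sub_nonneg.2 hf₁) (by simpa using htangent 0)
  linarith

/-- The Riesz kernel `(2 / ‖z‖) ^ q` truncated to the disc of radius `2`, which contains all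
differences of points of the unit disc. -/
noncomputable def rieszKernel (q : ℝ) : Plane → ℝ :=
  (ball 0 2).indicator fun z ↦ (2 / ‖z‖) ^ q

/-- A continuous nonnegative density on the plane that vanishes outside the open unit disc. -/
structure IsDiscDensity (w : Plane → ℝ) : Prop where
  continuous : Continuous w
  nonneg : ∀ x, 0 ≤ w x
  eq_zero : ∀ x ∉ ball 0 1, w x = 0

variable {q r : ℝ} {w : Plane → ℝ} {x : Plane}

lemma rieszKernel_nonneg (q : ℝ) (z : Plane) : 0 ≤ rieszKernel q z :=
  indicator_nonneg (fun _ _ ↦ by positivity) z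

lemma integrable_rieszKernel (hq : q < 2) : Integrable (rieszKernel q) := by
  rw [rieszKernel, integrable_indicator_iff measurableSet_ball]
  refine integrableOn_ball_of_norm_le_rpow (C := 2 ^ q) (α := q) (by simp) (by simpa using hq)
    (.of_forall fun z ↦ ?_)
    ((measurable_const.div measurable_norm).pow_const q).aestronglyMeasurable
  rw [norm_of_nonneg (by positivity), div_rpow zero_le_two (norm_nonneg z),
    rpow_neg (norm_nonneg z), div_eq_mul_inv]

lemma integrableOn_logKernel_rpow (hr : 0 < r) :
    IntegrableOn (fun z ↦ logKernel z ^ r) (ball 0 2) := by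
  refine integrableOn_ball_of_norm_le_rpow (C := ((2 * π)⁻¹ * r) ^ r * 2) (α := 1) (by simp)
    (by simp) ?_ ?_
  · filter_upwards [ae_restrict_mem measurableSet_ball,
      ae_restrict_of_ae (Measure.ae_ne volume (0 : Plane))] with z hz hz₀
    have hpos := norm_pos_iff.2 hz₀
    have hnonneg := logKernel_nonneg (mem_ball_zero_iff.1 hz).le
    have := pi_pos
    have hlog : logKernel z ≤ (2 * π)⁻¹ * r * (2 / ‖z‖) ^ r⁻¹ := by
      calc logKernel z = (2 * π)⁻¹ * log (2 / ‖z‖) := by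
            rw [logKernel, log_div two_ne_zero hpos.ne']
        _ ≤ (2 * π)⁻¹ * ((2 / ‖z‖) ^ r⁻¹ / r⁻¹) := by
            gcongr
            exact log_le_rpow_div (by positivity) (inv_pos.2 hr)
        _ = (2 * π)⁻¹ * r * (2 / ‖z‖) ^ r⁻¹ := by field_simp
    calc ‖logKernel z ^ r‖ = logKernel z ^ r := norm_of_nonneg (by positivity)
      _ ≤ ((2 * π)⁻¹ * r * (2 / ‖z‖) ^ r⁻¹) ^ r := by gcongr
      _ = ((2 * π)⁻¹ * r) ^ r * 2 * ‖z‖ ^ (-1 : ℝ) := by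
        rw [mul_rpow (by positivity) (by positivity), rpow_inv_rpow (by positivity) hr.ne',
          rpow_neg_one, div_eq_mul_inv, mul_assoc]
  · exact ((measurable_const.mul (measurable_const.sub
      (measurable_log.comp measurable_norm))).pow_const r).aestronglyMeasurable

lemma integrableOn_unitBall_of_continuous {f : Plane → ℝ} (hf : Continuous f) :
    IntegrableOn f (ball 0 1) :=
  (hf.continuousOn.integrableOn_compact (isCompact_closedBall 0 1)).mono_set ball_subset_closedBall

namespace IsDiscDensity

lemma eq_zero_of_notMem_closedBall (hw : IsDiscDensity w) (hx : x ∉ closedBall 0 1) : w x = 0 :=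
  hw.eq_zero x fun h ↦ hx (ball_subset_closedBall h)

lemma hasCompactSupport (hw : IsDiscDensity w) : HasCompactSupport w :=
  hasCompactSupport_of_closedBall fun _ hx ↦ hw.eq_zero_of_notMem_closedBall hx

lemma integrable (hw : IsDiscDensity w) : Integrable w :=
  hw.continuous.integrable_of_hasCompactSupport hw.hasCompactSupport

lemma const_mul (hw : IsDiscDensity w) {c : ℝ} (hc : 0 ≤ c) : IsDiscDensity fun x ↦ c * w x :=
  ⟨continuous_const.mul hw.continuous, fun x ↦ mul_nonneg hc (hw.nonneg x),
    fun x hx ↦ by rw [hw.eq_zero x hx, mul_zero]⟩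

lemma continuous_exp_logPotential (hw : IsDiscDensity w) :
    Continuous fun x ↦ exp (logPotential w x) :=
  continuous_exp.comp (continuous_logPotential hw.continuous hw.hasCompactSupport)

lemma integrable_rieszKernel_mul (hw : IsDiscDensity w) (hq : q < 2) (x : Plane) :
    Integrable fun z ↦ rieszKernel q z * w (x - z) := by
  obtain ⟨C, hC⟩ := hw.hasCompactSupport.exists_bound_of_continuous hw.continuous
  exact (integrable_rieszKernel hq).mul_bdd (c := C)
    (hw.continuous.comp (continuous_const.sub continuous_id)).aestronglyMeasurable
    (.of_forall fun z ↦ hC _)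

lemma exp_logPotential_le (hw : IsDiscDensity w) (hq₀ : 0 < q) (hq : q < 2)
    (hmass : ∫ x, w x ≤ 2 * π * q) (hx : x ∈ ball 0 1) : exp (logPotential w x) ≤
      1 + (2 * π * q)⁻¹ * (rieszKernel q ⋆[ContinuousLinearMap.mul ℝ ℝ] w) x := by
  have := pi_pos
  have hc : 0 < 2 * π * q := by positivity
  set f : Plane → ℝ := fun z ↦ (2 * π * q)⁻¹ * w (x - z)
  set G : Plane → ℝ := fun z ↦ q * (log 2 - log ‖z‖)
  have hf : Integrable f := (hw.integrable.comp_sub_left x).const_mul _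
  have hf₀ (z : Plane) : 0 ≤ f z := mul_nonneg (by positivity) (hw.nonneg _)
  have hGf : (fun z ↦ G z * f z) = fun z ↦ logKernel z * w (x - z) := by
    ext z
    simp only [G, f, logKernel]
    field_simp
  have hexp : (fun z ↦ exp (G z) * f z) =ᵐ[volume]
      fun z ↦ (2 * π * q)⁻¹ * (rieszKernel q z * w (x - z)) := by
    filter_upwards [Measure.ae_ne volume (0 : Plane)] with z hz₀
    by_cases hxz : x - z ∈ ball 0 1
    · have hz : z ∈ ball 0 2 := by
        rw [mem_ball_zero_iff] at hx hxz ⊢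
        have := norm_sub_le x (x - z)
        rw [sub_sub_cancel] at this
        linarith
      rw [rieszKernel, indicator_of_mem hz, rpow_def_of_pos (by positivity),
        log_div two_ne_zero (norm_ne_zero_iff.2 hz₀), mul_comm (log 2 - log ‖z‖)]
      exact mul_left_comm _ _ _
    · simp [f, hw.eq_zero _ hxz]
  have hmass' : ∫ z, f z ≤ 1 := by
    rw [integral_const_mul, integral_sub_left_eq_self w volume x, inv_mul_le_one₀ hc]
    exact hmass
  have hjensen := exp_integral_mul_le hf hf₀ hmass'
    (hGf ▸ integrable_logKernel_mul hw.continuous hw.hasCompactSupport x)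
    (((hw.integrable_rieszKernel_mul hq x).const_mul _).congr hexp.symm)
  rw [hGf, integral_congr_ae hexp, integral_const_mul _ fun z ↦ rieszKernel q z * w (x - z)]
    at hjensen
  exact hjensen.trans (add_le_add (sub_le_self _ (integral_nonneg hf₀)) le_rfl)

lemma setIntegral_exp_logPotential_le (hw : IsDiscDensity w) (hq₀ : 0 < q) (hq : q < 2)
    (hmass : ∫ x, w x ≤ 2 * π * q) :
    ∫ x in ball 0 1, exp (logPotential w x) ≤ π + ∫ z, rieszKernel q z := by
  have := pi_pos
  set R := rieszKernel q ⋆[ContinuousLinearMap.mul ℝ ℝ] w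
  have hR : Integrable R :=
    (integrable_rieszKernel hq).integrable_convolution _ hw.integrable
  have hR₀ (x : Plane) : 0 ≤ R x :=
    integral_nonneg fun z ↦ mul_nonneg (rieszKernel_nonneg q z) (hw.nonneg _)
  have hone : IntegrableOn (fun _ : Plane ↦ (1 : ℝ)) (ball 0 1) :=
    integrableOn_const measure_ball_lt_top.ne
  calc ∫ x in ball 0 1, exp (logPotential w x)
    _ ≤ ∫ x in ball 0 1, (1 + (2 * π * q)⁻¹ * R x) :=
        setIntegral_mono_on
          (integrableOn_unitBall_of_continuous hw.continuous_exp_logPotential)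
          (hone.add (hR.integrableOn.const_mul _)) measurableSet_ball
          fun x hx ↦ hw.exp_logPotential_le hq₀ hq hmass hx
    _ = π + (2 * π * q)⁻¹ * ∫ x in ball 0 1, R x := by
        rw [integral_add hone (hR.integrableOn.const_mul _), integral_const_mul]
        simp [volume_real_unitBall_plane]
    _ ≤ π + (2 * π * q)⁻¹ * ∫ x, R x := by
        gcongr
        · exact .of_forall hR₀
        · exact Measure.restrict_le_self
    _ = π + (2 * π * q)⁻¹ * ((∫ z, rieszKernel q z) * ∫ x, w x) := by
        rw [integral_convolution _ (integrable_rieszKernel hq) hw.integrable]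
        rfl
    _ ≤ π + (2 * π * q)⁻¹ * ((∫ z, rieszKernel q z) * (2 * π * q)) := by
        have : 0 ≤ ∫ z, rieszKernel q z := integral_nonneg (rieszKernel_nonneg q)
        gcongr
    _ = π + ∫ z, rieszKernel q z := by field_simp

lemma integrableOn_logKernel_mul_exp_logPotential (hw : IsDiscDensity w) :
    IntegrableOn (fun z ↦ logKernel z * exp (logPotential w ((2 : ℝ)⁻¹ • z))) (ball 0 1) :=
  ((locallyIntegrable_logKernel.integrableOn_isCompact (isCompact_closedBall 0 1)).mul_continuousOn
    (hw.continuous_exp_logPotential.comp (continuous_const_smul _)).continuousOn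
    (isCompact_closedBall 0 1)).mono_set ball_subset_closedBall

lemma logPotential_zero_le (hw : IsDiscDensity w) {f : Plane → ℝ}
    (hf : IntegrableOn (fun z ↦ logKernel z * f z) (ball 0 1)) (hle : ∀ x ∈ ball 0 1, w x ≤ f x) :
    logPotential w 0 ≤ ∫ z in ball 0 1, logKernel z * f z := by
  have heven (z : Plane) : logKernel z * w (0 - z) = logKernel (-z) * w (-z) := by
    rw [logKernel, logKernel, norm_neg, zero_sub]
  have hint := integrable_logKernel_mul hw.continuous hw.hasCompactSupport 0
  simp only [heven] at hint
  rw [logPotential_apply, integral_congr_ae (.of_forall heven),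
    integral_neg_eq_self (fun z ↦ logKernel z * w z),
    ← setIntegral_eq_integral_of_forall_compl_eq_zero
      fun z hz ↦ by rw [hw.eq_zero z hz, mul_zero]]
  refine setIntegral_mono_on (by simpa using hint.comp_neg.integrableOn) hf measurableSet_ball
    fun z hz ↦ mul_le_mul_of_nonneg_left (hle z hz) (logKernel_nonneg ?_)
  linarith [mem_ball_zero_iff.1 hz]

end IsDiscDensity

lemma exists_setIntegral_logKernel_mul_exp_logPotential_le (hq₀ : 0 < q) (hq : q < 2) :
    ∃ D, ∀ w, IsDiscDensity w → ∫ x, w x ≤ 2 * π * q →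
      ∫ z in ball 0 1, logKernel z * exp (logPotential w ((2 : ℝ)⁻¹ • z)) ≤ D := by
  obtain ⟨p, hp, hpq⟩ := exists_between ((one_lt_div hq₀).2 hq)
  rw [lt_div_iff₀ hq₀] at hpq
  have hp₀ : 0 < p := zero_lt_one.trans hp
  have hconj := (HolderConjugate.conjExponent hp).symm
  set p' := p.conjExponent
  have hkernel : IntegrableOn (fun z ↦ logKernel z ^ p' / p') (ball 0 1) :=
    ((integrableOn_logKernel_rpow hconj.pos).mono_set (ball_subset_ball one_le_two)).div_const p'
  refine ⟨(∫ z in ball 0 1, logKernel z ^ p' / p') +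
    4 * (π + ∫ z, rieszKernel (p * q) z) / p, fun w hw hmass ↦ ?_⟩
  have hpmass : ∫ x, p * w x ≤ 2 * π * (p * q) := by
    rw [integral_const_mul]
    linarith [mul_le_mul_of_nonneg_left hmass hp₀.le]
  have hpw := hw.const_mul hp₀.le
  set E : Plane → ℝ := fun x ↦ exp (logPotential (fun y ↦ p * w y) x)
  have hEcont : Continuous E := hpw.continuous_exp_logPotential
  have hE : IntegrableOn (fun z ↦ E ((2 : ℝ)⁻¹ • z) / p) (ball 0 1) :=
    (integrableOn_unitBall_of_continuous (hEcont.comp (continuous_const_smul _))).div_const p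
  have hhalf : ∫ z in ball 0 1, E ((2 : ℝ)⁻¹ • z) ≤ 4 * ∫ z in ball 0 1, E z := by
    have hmaps : MapsTo (fun z : Plane ↦ 0 + (2 : ℝ)⁻¹ • z) (ball 0 1) (ball 0 1) :=
      fun z hz ↦ add_smul_mem_unitBall (by norm_num) (by norm_num) hz
    have hfour : (((2 : ℝ)⁻¹) ^ 2)⁻¹ = 4 := by norm_num
    simpa only [zero_add, finrank_euclideanSpace_fin, hfour] using
      setIntegral_comp_add_smul_le (integrableOn_unitBall_of_continuous hEcont)
        (fun x ↦ (exp_pos _).le) measurableSet_ball measurableSet_ball (by norm_num) hmaps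
  calc ∫ z in ball 0 1, logKernel z * exp (logPotential w ((2 : ℝ)⁻¹ • z))
    _ ≤ ∫ z in ball 0 1, (logKernel z ^ p' / p' + E ((2 : ℝ)⁻¹ • z) / p) := by
        refine setIntegral_mono_on ?_ (hkernel.add hE) measurableSet_ball fun z hz ↦ ?_
        · exact hw.integrableOn_logKernel_mul_exp_logPotential
        · have hz2 : ‖z‖ ≤ 2 := by linarith [mem_ball_zero_iff.1 hz]
          have hyoung := young_inequality_of_nonneg (logKernel_nonneg hz2)
            (exp_pos (logPotential w ((2 : ℝ)⁻¹ • z))).le hconj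
          rwa [← exp_mul, mul_comm _ p, ← logPotential_const_mul] at hyoung
    _ = (∫ z in ball 0 1, logKernel z ^ p' / p') +
          (∫ z in ball 0 1, E ((2 : ℝ)⁻¹ • z)) / p := by
        rw [integral_add hkernel hE, integral_div p]
    _ ≤ _ := by
        gcongr
        exact hhalf.trans (mul_le_mul_of_nonneg_left
          (hpw.setIntegral_exp_logPotential_le (by positivity) hpq hpmass) zero_le_four)

end ExponentialIntegrability

section UnitEstimate

variable {T q θ M A α t : ℝ} {u : ℝ → Plane → ℝ} {w : Plane → ℝ} {x : Plane}

lemma poincareH_half_smul_le (hx : x ∈ ball 0 1) : poincareH ((2 : ℝ)⁻¹ • x) ≤ 64 / 9 := by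
  rw [mem_ball_zero_iff] at hx
  have hnorm : ‖(2 : ℝ)⁻¹ • x‖ ^ 2 ≤ 1 / 4 := by
    rw [norm_smul, norm_inv, norm_two]
    nlinarith [norm_nonneg x]
  calc poincareH ((2 : ℝ)⁻¹ • x) ≤ (2 / (1 - 1 / 4)) ^ 2 := by
        have : 0 < 1 - ‖(2 : ℝ)⁻¹ • x‖ ^ 2 := by linarith
        rw [poincareH]
        gcongr
    _ = 64 / 9 := by norm_num

namespace IsDiscFlow

lemma isDiscDensity_excess (hu : IsDiscFlow T u) (hM : ∀ t ∈ Ico 0 T, ∀ x ∈ ball 0 1, u t x ≤ M)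
    (hα : 0 < α) (ht : t ∈ Ico 0 T) : IsDiscDensity (excess α u t) :=
  ⟨(contDiff_slice (hu.contDiffOn_excess hM hα) ht).continuous, excess_nonneg hα ht.1,
    fun _ hx ↦ excess_of_notMem hx⟩

lemma continuousOn_max_sub_mul_poincareH (hu : IsDiscFlow T u) (ht : t ∈ Ico 0 T) (c : ℝ) :
    ContinuousOn (fun x ↦ max (u t x - c * poincareH x) 0) (ball 0 1) :=
  ((contDiffOn_slice hu.contDiffOn ht).continuousOn.sub
    (continuousOn_const.mul (contDiffOn_poincareH (n := 0)).continuousOn)).sup continuousOn_const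

lemma integrableOn_max_sub_barrier (hu : IsDiscFlow T u)
    (hM : ∀ t ∈ Ico 0 T, ∀ x ∈ ball 0 1, u t x ≤ M) (hα : 0 < α) (ht : t ∈ Ico 0 T) :
    IntegrableOn (fun x ↦ max (u t x - barrier α t x) 0) (ball 0 1) := by
  refine .of_bound measure_ball_lt_top
    ((hu.continuousOn_max_sub_mul_poincareH ht _).aestronglyMeasurable measurableSet_ball) M ?_
  filter_upwards [ae_restrict_mem measurableSet_ball] with x hx
  rw [norm_of_nonneg (le_max_right _ _)]
  have hpos := hu.pos t ht x hx
  exact max_le (by linarith [hM t ht x hx, barrier_pos hα ht.1 hx])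
    (hpos.le.trans (hM t ht x hx))

lemma integral_excess_le (hu : IsDiscFlow T u) (hM : ∀ t ∈ Ico 0 T, ∀ x ∈ ball 0 1, u t x ≤ M)
    (hα : 0 < α) (ht : t ∈ Ico 0 T) :
    ∫ x, excess α u t x ≤ ∫ x in ball 0 1, max (u t x - barrier α t x) 0 := by
  rw [← setIntegral_eq_integral_of_forall_compl_eq_zero fun x hx ↦ excess_of_notMem hx]
  exact setIntegral_mono_on (hu.isDiscDensity_excess hM hα ht).integrable.integrableOn
    (hu.integrableOn_max_sub_barrier hM hα ht) measurableSet_ball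
    fun x hx ↦ hu.excess_le_max hα ht hx

lemma apply_half_smul_le (hu : IsDiscFlow T u) (hM : ∀ t ∈ Ico 0 T, ∀ x ∈ ball 0 1, u t x ≤ M)
    (hθ₀ : 0 < θ) (hθ₁ : θ < 1) (hT : 1 < T) (hx : x ∈ ball 0 1) : u θ ((2 : ℝ)⁻¹ • x) ≤
      64 / 3 * exp 2 * exp (logPotential (fun y ↦ θ⁻¹ * excess 1 u 0 y) ((2 : ℝ)⁻¹ • x)) := by
  have hx' : (2 : ℝ)⁻¹ • x ∈ ball (0 : Plane) 1 := by
    simpa using add_smul_mem_unitBall (x₀ := 0) (r := 2⁻¹) (by norm_num) (by norm_num) hx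
  have hbarrier : barrier 1 θ ((2 : ℝ)⁻¹ • x) ≤ 64 / 3 := by
    calc barrier 1 θ ((2 : ℝ)⁻¹ • x) ≤ (1 + 2 * 1) * (64 / 9) := by
          rw [barrier]
          have := (poincareH_pos hx').le
          gcongr
          exact poincareH_half_smul_le hx
      _ = 64 / 3 := by norm_num
  refine (hu.le_barrier_mul_exp hM one_pos ⟨hθ₀, hθ₁.trans hT⟩ hx').trans ?_
  rw [logPotential_const_mul, div_eq_inv_mul, exp_add, mul_comm (exp _), ← mul_assoc]
  gcongr

lemma apply_one_zero_le (hu : IsDiscFlow T u) (hM : ∀ t ∈ Ico 0 T, ∀ x ∈ ball 0 1, u t x ≤ M)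
    (hT : 1 < T) : u 1 0 ≤ 12 * exp (logPotential (excess 1 u 0) 0 + 2) := by
  refine (hu.le_barrier_mul_exp hM one_pos ⟨one_pos, hT⟩ (mem_ball_self one_pos)).trans_eq ?_
  rw [barrier, poincareH, div_one, norm_zero]
  norm_num

lemma logPotential_excess_zero_le (hu : IsDiscFlow T u)
    (hM : ∀ t ∈ Ico 0 T, ∀ x ∈ ball 0 1, u t x ≤ M) (hT : 0 < T) (hα : 0 < α)
    (hw : IsDiscDensity w)
    (hle : ∀ z ∈ ball 0 1, u 0 z ≤ A * exp (logPotential w ((2 : ℝ)⁻¹ • z))) :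
    logPotential (excess α u 0) 0 ≤
      A * ∫ z in ball 0 1, logKernel z * exp (logPotential w ((2 : ℝ)⁻¹ • z)) := by
  have h0 : (0 : ℝ) ∈ Ico 0 T := ⟨le_rfl, hT⟩
  have hint := hw.integrableOn_logKernel_mul_exp_logPotential.const_mul A
  simp only [mul_left_comm A] at hint
  rw [← integral_const_mul]
  simp only [mul_left_comm A]
  refine (hu.isDiscDensity_excess hM hα h0).logPotential_zero_le hint fun z hz ↦ ?_
  calc excess α u 0 z ≤ max (u 0 z - barrier α 0 z) 0 := hu.excess_le_max hα h0 hz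
    _ ≤ u 0 z := max_le (sub_le_self _ (barrier_pos hα le_rfl hz).le) (hu.pos 0 h0 z hz).le
    _ ≤ _ := hle z hz

/-- The flow is compared with the barrier twice: on the unit disc up to time `θ`, which makes
`u θ` exponentially integrable against `logKernel` on the half disc, and then on the half disc from
time `θ` to time `1`. -/
lemma exists_forall_apply_one_zero_le (hq₀ : 0 < q) (hq : q < 2) (hθ₀ : 0 < θ) (hθ₁ : θ < 1) :
    ∃ C, ∀ T u M, IsDiscFlow T u → 1 < T → (∀ t ∈ Ico 0 T, ∀ x ∈ ball 0 1, u t x ≤ M) →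
      ∫ x in ball 0 1, max (u 0 x - poincareH x) 0 ≤ 2 * π * q * θ → u 1 0 ≤ C := by
  obtain ⟨D, hD⟩ := exists_setIntegral_logKernel_mul_exp_logPotential_le hq₀ hq
  have hθ : 0 < 1 - θ := sub_pos.2 hθ₁
  set κ : ℝ := 2⁻¹ ^ 2 / (1 - θ)
  have hκ : 0 < κ := by positivity
  set A : ℝ := κ * (64 / 3 * exp 2)
  refine ⟨12 * exp (A * D + 2) / κ, fun T u M hu hT hM hmass ↦ ?_⟩
  have h0T : (0 : ℝ) ∈ Ico 0 T := ⟨le_rfl, one_pos.trans hT⟩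
  set w : Plane → ℝ := fun y ↦ θ⁻¹ * excess 1 u 0 y
  have hw : IsDiscDensity w :=
    (hu.isDiscDensity_excess hM one_pos h0T).const_mul (inv_nonneg.2 hθ₀.le)
  have hwmass : ∫ x, w x ≤ 2 * π * q := by
    rw [integral_const_mul, inv_mul_le_iff₀' hθ₀]
    exact (hu.integral_excess_le hM one_pos h0T).trans (by simpa [barrier] using hmass)
  set v := parabolicRescale 0 2⁻¹ θ (1 - θ) u
  set T' := (T - θ) / (1 - θ)
  have hT' : 1 < T' := (one_lt_div hθ).2 (by linarith)
  have hTT' : θ + (1 - θ) * T' = T := by rw [mul_div_cancel₀ _ hθ.ne', add_sub_cancel]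
  have hv : IsDiscFlow T' v :=
    hu.rescale (by norm_num) (by norm_num) hθ₀.le hθ hTT'.le
  have hvM : ∀ s ∈ Ico 0 T', ∀ x ∈ ball 0 1, v s x ≤ κ * M := fun s hs x hx ↦
    mul_le_mul_of_nonneg_left (hM _ (add_mul_mem_Ico hθ₀.le hθ hTT'.le hs) _
      (add_smul_mem_unitBall (by norm_num) (by norm_num) hx)) hκ.le
  have hinit : ∀ z ∈ ball 0 1, v 0 z ≤ A * exp (logPotential w ((2 : ℝ)⁻¹ • z)) := by
    intro z hz
    simpa [v, parabolicRescale, κ, A, mul_assoc] using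
      mul_le_mul_of_nonneg_left (hu.apply_half_smul_le hM hθ₀ hθ₁ hT hz) hκ.le
  have hpot : logPotential (excess 1 v 0) 0 ≤ A * D :=
    (hv.logPotential_excess_zero_le hvM (one_pos.trans hT') one_pos hw hinit).trans
      (mul_le_mul_of_nonneg_left (hD w hw hwmass) (by positivity))
  rw [le_div_iff₀' hκ]
  calc κ * u 1 0 = v 1 0 := by simp [v, parabolicRescale, κ]
    _ ≤ 12 * exp (logPotential (excess 1 v 0) 0 + 2) := hv.apply_one_zero_le hvM hT'
    _ ≤ 12 * exp (A * D + 2) := by gcongr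

end IsDiscFlow

end UnitEstimate

section Smoothing

variable {T α β δ r a τ ε : ℝ} {u : ℝ → Plane → ℝ} {x₀ x : Plane}

lemma inv_one_sub_norm_sq_le_poincareH (hx : x ∈ ball 0 1) : ((1 - ‖x‖) ^ 2)⁻¹ ≤ poincareH x := by
  have hpos := one_sub_norm_sq_pos hx
  rw [mem_ball_zero_iff] at hx
  have hd : 0 < 1 - ‖x‖ := sub_pos.2 hx
  rw [poincareH, ← inv_pow]
  gcongr
  rw [le_div_iff₀ hpos, inv_mul_le_iff₀ hd]
  nlinarith [norm_nonneg x]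

lemma poincareH_le_of_norm_le (hε : 0 < ε) (hx : ‖x‖ ≤ 1 - ε) : poincareH x ≤ (2 / ε) ^ 2 := by
  have hle : ε ≤ 1 - ‖x‖ ^ 2 := by nlinarith [norm_nonneg x]
  have := hε.trans_le hle
  rw [poincareH]
  gcongr

lemma one_sub_norm_sq_mul_poincareH_le (hx₀ : x₀ ∈ ball 0 1) (hr : 0 < r)
    (hr_le : r ≤ (1 - ‖x₀‖) / 2) (hx : x ∈ ball 0 1) :
    (1 - ‖x₀‖) ^ 2 / 4 * poincareH (x₀ + r • x) ≤ poincareH x := by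
  have hd : 0 < 1 - ‖x₀‖ := sub_pos.2 (mem_ball_zero_iff.1 hx₀)
  have hnorm : ‖x₀ + r • x‖ ≤ 1 - (1 - ‖x₀‖) / 2 := by
    calc ‖x₀ + r • x‖ ≤ ‖x₀‖ + r * ‖x‖ := by
          simpa [norm_smul, abs_of_pos hr] using norm_add_le x₀ (r • x)
      _ ≤ ‖x₀‖ + r := by
          gcongr
          exact mul_le_of_le_one_right hr.le (mem_ball_zero_iff.1 hx).le
      _ ≤ 1 - (1 - ‖x₀‖) / 2 := by linarith
  calc (1 - ‖x₀‖) ^ 2 / 4 * poincareH (x₀ + r • x)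
    _ ≤ (1 - ‖x₀‖) ^ 2 / 4 * (2 / ((1 - ‖x₀‖) / 2)) ^ 2 := by
        gcongr
        exact poincareH_le_of_norm_le (by positivity) hnorm
    _ = 4 := by
        field_simp
        norm_num
    _ ≤ poincareH x := four_le_poincareH hx

lemma setIntegral_max_rescale_sub_le (hr : 0 < r) (hτ : 0 < τ) (hx₀ : ‖x₀‖ + r ≤ 1)
    (hle : ∀ x ∈ ball 0 1, r ^ 2 / τ * (α * poincareH (x₀ + r • x)) ≤ poincareH x)
    (hint : IntegrableOn (fun x ↦ max (u 0 x - α * poincareH x) 0) (ball 0 1)) :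
    ∫ x in ball 0 1, max (parabolicRescale x₀ r 0 τ u 0 x - poincareH x) 0 ≤
      τ⁻¹ * ∫ x in ball 0 1, max (u 0 x - α * poincareH x) 0 := by
  set f : Plane → ℝ := fun x ↦ max (u 0 x - α * poincareH x) 0
  have hmaps : MapsTo (fun x ↦ x₀ + r • x) (ball 0 1) (ball 0 1) :=
    fun x hx ↦ add_smul_mem_unitBall hr hx₀ hx
  have hf := integrableOn_comp_add_smul hint measurableSet_ball measurableSet_ball hr.ne' hmaps
  calc ∫ x in ball 0 1, max (parabolicRescale x₀ r 0 τ u 0 x - poincareH x) 0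
    _ ≤ ∫ x in ball 0 1, r ^ 2 / τ * f (x₀ + r • x) := by
        refine integral_mono_of_nonneg (.of_forall fun x ↦ le_max_right _ _) (hf.const_mul _) ?_
        filter_upwards [ae_restrict_mem measurableSet_ball] with x hx
        simp only [parabolicRescale, mul_zero, add_zero, f]
        rw [mul_max_of_nonneg _ _ (by positivity), mul_zero, mul_sub]
        exact max_le_max (sub_le_sub_left (hle x hx) _) le_rfl
    _ ≤ r ^ 2 / τ * ((r ^ 2)⁻¹ * ∫ x in ball 0 1, f x) := by
        rw [integral_const_mul]
        gcongr
        simpa only [finrank_euclideanSpace_fin] using setIntegral_comp_add_smul_le hint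
          (fun x ↦ le_max_right _ _) measurableSet_ball measurableSet_ball hr hmaps
    _ = τ⁻¹ * ∫ x in ball 0 1, f x := by field_simp

lemma max_sub_mul_poincareH_anti (hαβ : α ≤ β) (hx : x ∈ ball 0 1) :
    max (a - β * poincareH x) 0 ≤ max (a - α * poincareH x) 0 := by
  have := poincareH_pos hx
  gcongr

namespace IsDiscFlow

lemma exists_rescale_le (hu : IsDiscFlow T u) (hr : 0 < r) (hx₀ : ‖x₀‖ + r < 1) (ha : 0 ≤ a)
    (hτ : 0 < τ) (hT : a + τ * T' < T) :
    ∃ M, ∀ s ∈ Ico 0 T', ∀ x ∈ ball 0 1, parabolicRescale x₀ r a τ u s x ≤ M := by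
  have hmaps : MapsTo (fun p : ℝ × Plane ↦ (a + τ * p.1, x₀ + r • p.2))
      (Icc 0 T' ×ˢ closedBall 0 1) (Ico 0 T ×ˢ ball 0 1) := by
    rintro ⟨s, x⟩ ⟨hs, hx⟩
    rw [mem_closedBall_zero_iff] at hx
    refine ⟨⟨add_nonneg ha (mul_nonneg hτ.le hs.1), ?_⟩, mem_ball_zero_iff.2 ?_⟩
    · exact (add_le_add_right (mul_le_mul_of_nonneg_left hs.2 hτ.le) a).trans_lt hT
    · calc ‖x₀ + r • x‖ ≤ ‖x₀‖ + r * ‖x‖ := by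
            simpa [norm_smul, abs_of_pos hr] using norm_add_le x₀ (r • x)
        _ ≤ ‖x₀‖ + r * 1 := by gcongr
        _ < 1 := by rwa [mul_one]
  obtain ⟨M, hM⟩ := (isCompact_Icc.prod (isCompact_closedBall (0 : Plane) 1)).bddAbove_image
    (continuousOn_const.mul (hu.contDiffOn.continuousOn.comp (by fun_prop) hmaps) :
      ContinuousOn ↿(parabolicRescale x₀ r a τ u) _)
  exact ⟨M, fun s hs x hx ↦ hM ⟨(s, x), ⟨Ico_subset_Icc_self hs, ball_subset_closedBall hx⟩, rfl⟩⟩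

lemma exists_forall_sq_div_mul_le (hδ : 0 < δ) :
    ∃ C, ∀ T u α t r x₀, IsDiscFlow T u → t ∈ Ioo 0 T → 0 < r → ‖x₀‖ + r < 1 →
      (∀ x ∈ ball 0 1, r ^ 2 / t * (α * poincareH (x₀ + r • x)) ≤ poincareH x) →
      IntegrableOn (fun x ↦ max (u 0 x - α * poincareH x) 0) (ball 0 1) →
      (1 + δ) * (∫ x in ball 0 1, max (u 0 x - α * poincareH x) 0) / (4 * π) ≤ t →
      r ^ 2 / t * u t x₀ ≤ C := by
  obtain ⟨C, hC⟩ := exists_forall_apply_one_zero_le (q := (2 + δ) / (1 + δ)) (θ := 2 / (2 + δ))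
    (by positivity) ((div_lt_iff₀ (by positivity)).2 (by linarith)) (by positivity)
    ((div_lt_one (by positivity)).2 (by linarith))
  refine ⟨C, fun T u α t r x₀ hu ⟨ht₀, htT⟩ hr hx₀r hle hint hmass ↦ ?_⟩
  obtain ⟨T', hT', hT'T⟩ := exists_between ((one_lt_div ht₀).2 htT)
  have htT' : 0 + t * T' < T := by rwa [zero_add, ← lt_div_iff₀' ht₀]
  obtain ⟨M, hM⟩ := hu.exists_rescale_le hr hx₀r le_rfl ht₀ htT'
  have hmass' : t⁻¹ * ∫ x in ball 0 1, max (u 0 x - α * poincareH x) 0 ≤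
      2 * π * ((2 + δ) / (1 + δ)) * (2 / (2 + δ)) := by
    have := pi_pos
    rw [div_le_iff₀ (by positivity), ← le_div_iff₀' (by positivity)] at hmass
    rw [inv_mul_le_iff₀ ht₀]
    refine hmass.trans_eq ?_
    field_simp
    norm_num
  simpa [parabolicRescale] using hC _ _ _ (hu.rescale hr hx₀r.le le_rfl ht₀ htT'.le) hT' hM
    ((setIntegral_max_rescale_sub_le hr ht₀ hx₀r.le hle hint).trans hmass')

lemma exists_forall_le_of_pos (hδ : 0 < δ) :
    ∃ C, ∀ T u α t, IsDiscFlow T u → t ∈ Ioo 0 T → t ≤ α →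
      IntegrableOn (fun x ↦ max (u 0 x - α * poincareH x) 0) (ball 0 1) →
      (1 + δ) * (∫ x in ball 0 1, max (u 0 x - α * poincareH x) 0) / (4 * π) ≤ t →
      ∀ x ∈ ball 0 1, u t x ≤ C * α * poincareH x := by
  obtain ⟨C, hC⟩ := exists_forall_sq_div_mul_le hδ
  refine ⟨4 * C, fun T u α t hu ht htα hint hmass x₀ hx₀ ↦ ?_⟩
  have ht₀ := ht.1
  have hα := ht₀.trans_le htα
  set d := 1 - ‖x₀‖
  have hd : 0 < d := sub_pos.2 (mem_ball_zero_iff.1 hx₀)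
  -- With this radius the rescaled barrier `α * poincareH` stays below `poincareH`.
  set r := d / 2 * √(t / α)
  have hr : 0 < r := by positivity
  have hr_sq : r ^ 2 / t * α = d ^ 2 / 4 := by
    rw [mul_pow, sq_sqrt (by positivity)]
    field_simp
    norm_num
  have hrd : r ≤ d / 2 :=
    mul_le_of_le_one_right (by positivity) (sqrt_le_one.2 ((div_le_one hα).2 htα))
  have hle (x : Plane) (hx : x ∈ ball 0 1) :
      r ^ 2 / t * (α * poincareH (x₀ + r • x)) ≤ poincareH x := by
    rw [← mul_assoc, hr_sq]
    exact one_sub_norm_sq_mul_poincareH_le hx₀ hr hrd hx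
  have hone : r ^ 2 / t * u t x₀ ≤ C :=
    hC T u α t r x₀ hu ht hr (by linarith) hle hint hmass
  have hC₀ : 0 < C :=
    (mul_pos (by positivity) (hu.pos t (Ioo_subset_Ico_self ht) x₀ hx₀)).trans_le hone
  calc u t x₀ = 4 * (r ^ 2 / t * α) * (d ^ 2)⁻¹ * u t x₀ := by
        rw [hr_sq]
        field_simp
    _ = 4 * (r ^ 2 / t * u t x₀) * α * (d ^ 2)⁻¹ := by ring
    _ ≤ 4 * C * α * poincareH x₀ := by
        gcongr
        exact inv_one_sub_norm_sq_le_poincareH hx₀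

lemma integrableOn_max_sub_mul_poincareH_of_le (hu : IsDiscFlow T u) (hT : 0 < T) (hαβ : α ≤ β)
    (hint : IntegrableOn (fun x ↦ max (u 0 x - α * poincareH x) 0) (ball 0 1)) :
    IntegrableOn (fun x ↦ max (u 0 x - β * poincareH x) 0) (ball 0 1) := by
  refine hint.mono' ((hu.continuousOn_max_sub_mul_poincareH ⟨le_rfl, hT⟩ _).aestronglyMeasurable
    measurableSet_ball) ?_
  filter_upwards [ae_restrict_mem measurableSet_ball] with x hx
  exact (norm_of_nonneg (le_max_right _ _)).trans_le (max_sub_mul_poincareH_anti hαβ hx)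

lemma tendsto_nhdsGT_zero (hu : IsDiscFlow T u) (hT : 0 < T) (hx : x ∈ ball 0 1) :
    Tendsto (fun s ↦ u s x) (𝓝[>] 0) (𝓝 (u 0 x)) := by
  have hcont : ContinuousOn (fun s ↦ u s x) (Ico 0 T) :=
    hu.contDiffOn.continuousOn.comp (f := fun s ↦ (s, x)) (by fun_prop) fun s hs ↦ ⟨hs, hx⟩
  rw [← nhdsWithin_Ioo_eq_nhdsGT hT]
  exact (hcont 0 ⟨le_rfl, hT⟩).mono_left (nhdsWithin_mono 0 Ioo_subset_Ico_self)

end IsDiscFlow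

theorem L1_Linfty_smoothing_general (δ : ℝ) (hδ : 0 < δ) :
    ∃ C, ∀ T u α, IsDiscFlow T u →
      IntegrableOn (fun x ↦ max (u 0 x - α * poincareH x) 0) (ball 0 1) → ∀ t ∈ Ico 0 T,
      (1 + δ) * (∫ x in ball 0 1, max (u 0 x - α * poincareH x) 0) / (4 * π) ≤ t →
      ∀ x ∈ ball 0 1, u t x ≤ C * max α t * poincareH x := by
  obtain ⟨C, hC⟩ := IsDiscFlow.exists_forall_le_of_pos hδ
  refine ⟨C, fun T u α hu hint t ht hmass x hx ↦ ?_⟩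
  have hT : 0 < T := ht.1.trans_lt ht.2
  have hpos (s : ℝ) (hs : s ∈ Ioo 0 T) (hts : t ≤ s) : u s x ≤ C * max α s * poincareH x := by
    have hint' := hu.integrableOn_max_sub_mul_poincareH_of_le hT (le_max_left α s) hint
    refine hC T u _ s hu hs (le_max_right _ _) hint' (le_trans ?_ (hmass.trans hts)) x hx
    have := pi_pos
    gcongr _ * ?_ / _
    exact setIntegral_mono_on hint' hint measurableSet_ball fun y hy ↦
      max_sub_mul_poincareH_anti (le_max_left _ _) hy
  rcases ht.1.eq_or_lt with rfl | ht₀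
  · have hlim : Tendsto (fun s ↦ C * max α s * poincareH x) (𝓝[>] 0)
        (𝓝 (C * max α 0 * poincareH x)) :=
      Continuous.tendsto' (by fun_prop) _ _ rfl |>.mono_left nhdsWithin_le_nhds
    refine le_of_tendsto_of_tendsto (hu.tendsto_nhdsGT_zero hT hx) hlim ?_
    filter_upwards [Ioo_mem_nhdsGT hT] with s hs
    exact hpos s hs hs.1.le
  · exact hpos t ⟨ht₀, ht.2⟩ le_rfl

lemma IsDiscFlow.of_contDiffOn_top {u : Plane → ℝ → ℝ}
    (hu : ContDiffOn ℝ (⊤ : ℕ∞) (fun p : Plane × ℝ ↦ u p.1 p.2) (ball 0 1 ×ˢ Ico 0 T))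
    (hpos : ∀ x ∈ ball 0 1, ∀ t ∈ Ico 0 T, 0 < u x t)
    (hpde : ∀ x ∈ ball 0 1, ∀ t ∈ Ico 0 T,
      deriv (fun s ↦ u x s) t = lap (fun y ↦ log (u y t)) x) :
    IsDiscFlow T fun t x ↦ u x t where
  contDiffOn := (hu.of_le (WithTop.coe_le_coe.2 (le_top (a := (2 : ℕ∞))))).comp
    (f := fun p : ℝ × Plane ↦ (p.2, p.1)) (by fun_prop) fun _ hp ↦ ⟨hp.2, hp.1⟩
  pos t ht x hx := hpos x hx t ht
  deriv_eq t ht x hx := by rw [hpde x hx t (Ioo_subset_Ico_self ht), lap_eq_laplacian]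

end Smoothing

/-- **`L¹`–`L∞` smoothing estimate** (special case of Topping–Yin).
For every `δ > 0` there is `C = C(δ)` such that: if `u > 0` solves `∂ₜ u = Δ log u`
on `B × [0,T)`, `α ≥ 1`, and `(u₀ - α h̃)₊ ∈ L¹(B)`, then for every
`t ∈ [0, min{1,T})` with `t ≥ (1+δ)‖(u₀ - α h̃)₊‖_{L¹(B)}/(4π)` one has
`u(t) ≤ C α h̃` throughout `B`. -/
theorem L1_Linfty_smoothing (δ : ℝ) (hδ : 0 < δ) :
    ∃ C : ℝ, ∀ (T : ℝ) (u : EuclideanSpace ℝ (Fin 2) → ℝ → ℝ) (α : ℝ),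
      0 < T → 1 ≤ α →
      ContDiffOn ℝ (⊤ : ℕ∞) (fun p : EuclideanSpace ℝ (Fin 2) × ℝ => u p.1 p.2)
        (ball 0 1 ×ˢ Ico 0 T) →
      (∀ x ∈ ball (0 : EuclideanSpace ℝ (Fin 2)) 1, ∀ t ∈ Ico (0:ℝ) T, 0 < u x t) →
      (∀ x ∈ ball (0 : EuclideanSpace ℝ (Fin 2)) 1, ∀ t ∈ Ico (0:ℝ) T,
        deriv (fun s => u x s) t = lap (fun y => log (u y t)) x) →
      IntegrableOn (fun x => max (u x 0 - α * poincareH x) 0)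
        (ball (0 : EuclideanSpace ℝ (Fin 2)) 1) →
      ∀ t ∈ Ico (0:ℝ) (min 1 T),
        (1 + δ) * (∫ x in ball (0 : EuclideanSpace ℝ (Fin 2)) 1,
            max (u x 0 - α * poincareH x) 0) / (4 * π) ≤ t →
        ∀ x ∈ ball (0 : EuclideanSpace ℝ (Fin 2)) 1, u x t ≤ C * α * poincareH x := by
  obtain ⟨C, hC⟩ := L1_Linfty_smoothing_general δ hδ
  refine ⟨C, fun T u α _ hα hu hpos hpde hint t ht hmass x hx ↦ ?_⟩
  have htα : t ≤ α := (ht.2.trans_le (min_le_left 1 T)).le.trans hα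
  simpa only [max_eq_left htα] using hC T _ α (.of_contDiffOn_top hu hpos hpde) hint t
    ⟨ht.1, ht.2.trans_le (min_le_right 1 T)⟩ hmass x hx
end

section
/- Let 0 < r0 < e^{-1}. Then for all r ∈ (0,1), ε(r0)/(δ(r0) + r²) ≤ 1/(r²(log r)²), with equality if and only if r = r0. -/
open Real Set

/-!
Put `a = -log r₀ > 1` and `s = log (r₀ / r)`. After clearing denominators and dividing by `r²`, the
comparison of the two factors at `r` becomes `s² ≤ a (exp (2s) - 1 - 2s)`, where `-a < s` because
`r < 1`, and `s = 0` exactly when `r = r₀`. Let `s ≠ 0`. If `-1 < s`, squaring `1 + s < exp s` gives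
`s² < exp (2s) - 1 - 2s`. If `-a < s ≤ -1`, then `s² < a (-s)` and `-s < exp (2s) - 1 - 2s`.
-/

lemma sq_lt_mul_exp_two_mul_sub {a s : ℝ} (ha : 1 ≤ a) (has : -a ≤ s) (hs : s ≠ 0) :
    s ^ 2 < a * (exp (2 * s) - 1 - 2 * s) := by
  rcases le_or_gt s (-1) with hs1 | hs1
  · calc s ^ 2 = -s * -s := by ring
      _ ≤ a * -s := mul_le_mul_of_nonneg_right (by linarith) (by linarith)
      _ < a * (exp (2 * s) - 1 - 2 * s) :=
        mul_lt_mul_of_pos_left (by linarith [exp_pos (2 * s)]) (by linarith)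
  · have hexp : (s + 1) ^ 2 < exp (2 * s) := by
      calc (s + 1) ^ 2 < exp s ^ 2 :=
            pow_lt_pow_left₀ (add_one_lt_exp hs) (by linarith) two_ne_zero
        _ = exp (2 * s) := (exp_nat_mul s 2).symm
    have hsq : s ^ 2 < exp (2 * s) - 1 - 2 * s := by linarith
    exact hsq.trans_le (le_mul_of_one_le_left ((sq_nonneg s).trans hsq.le) ha)

lemma sq_mul_log_sq_lt {r₀ r : ℝ} (h0 : 0 < r₀) (h1 : r₀ ≤ exp (-1)) (hr0 : 0 < r) (hr1 : r ≤ 1)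
    (hne : r ≠ r₀) :
    r ^ 2 * log r ^ 2 < -log r₀ * (r₀ ^ 2 + (-log r₀ - 1) * r ^ 2) := by
  have hlog₀ : log r₀ ≤ -1 := (log_le_iff_le_exp h0).2 h1
  have hlog : log r ≤ 0 := log_nonpos hr0.le hr1
  have hs : log r₀ - log r ≠ 0 := sub_ne_zero.2 fun h => hne (log_injOn_pos hr0 h0 h.symm)
  have hexp : r ^ 2 * exp (2 * (log r₀ - log r)) = r₀ ^ 2 := by
    rw [← log_div h0.ne' hr0.ne', two_mul, exp_add, exp_log (div_pos h0 hr0)]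
    field_simp
  have hkey := sq_lt_mul_exp_two_mul_sub (a := -log r₀) (by linarith) (by linarith) hs
  linear_combination r ^ 2 * hkey - log r₀ * hexp

/-- The conformal factor `h` of the hyperbolic cusp metric on the punctured unit disc, as a function
of `r = |x|`. -/
noncomputable def cuspFactor (r : ℝ) : ℝ :=
  1 / (r ^ 2 * log r ^ 2)

/-- The conformal factor `ε(r₀) / (δ(r₀) + r²)` of the cigar metric tangent to the cusp at radius
`r₀`, as a function of `r = |x|`. -/
noncomputable def cigarFactor (r₀ r : ℝ) : ℝ :=
  (1 / (-log r₀ * (-log r₀ - 1))) / (r₀ ^ 2 / (-log r₀ - 1) + r ^ 2)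

lemma cigarFactor_eq_one_div {r₀ : ℝ} (h : log r₀ ≠ -1) (r : ℝ) :
    cigarFactor r₀ r = 1 / (-log r₀ * (r₀ ^ 2 + (-log r₀ - 1) * r ^ 2)) := by
  have hc : -log r₀ - 1 ≠ 0 := fun hc => h (by linarith)
  rw [cigarFactor, div_add' _ _ _ hc, div_div, mul_assoc, mul_div_cancel₀ _ hc,
    mul_comm (r ^ 2)]

lemma cigarFactor_self {r₀ : ℝ} (h : log r₀ ≠ -1) : cigarFactor r₀ r₀ = cuspFactor r₀ := by
  rw [cigarFactor_eq_one_div h, cuspFactor]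
  ring_nf

lemma cigarFactor_lt_cuspFactor {r₀ r : ℝ} (h0 : 0 < r₀) (h1 : r₀ < exp (-1))
    (hr : r ∈ Ioo 0 1) (hne : r ≠ r₀) : cigarFactor r₀ r < cuspFactor r := by
  have hlog : log r ≠ 0 := (log_neg hr.1 hr.2).ne
  have hpos : 0 < r ^ 2 * log r ^ 2 := mul_pos (pow_pos hr.1 2) (sq_pos_of_ne_zero hlog)
  rw [cigarFactor_eq_one_div ((log_lt_iff_lt_exp h0).2 h1).ne]
  exact one_div_lt_one_div_of_lt hpos (sq_mul_log_sq_lt h0 h1.le hr.1 hr.2.le hne)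

/-- **The tangent cigar lies below the cusp.** For `0 < r₀ < e⁻¹`, with
`δ(r₀) = r₀²/(-log r₀ - 1)` and `ε(r₀) = 1/((-log r₀)(-log r₀ - 1))`, one has
`ε/(δ + r²) ≤ 1/(r² (log r)²)` for all `r ∈ (0,1)`, with equality iff `r = r₀`. -/
theorem cigar_touches_cusp (r0 : ℝ) (h0 : 0 < r0) (h1 : r0 < exp (-1)) :
    ∀ r ∈ Ioo (0:ℝ) 1,
      (1 / ((-log r0) * (-log r0 - 1))) / (r0^2 / (-log r0 - 1) + r^2)
          ≤ 1 / (r^2 * (log r)^2)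
        ∧ ((1 / ((-log r0) * (-log r0 - 1))) / (r0^2 / (-log r0 - 1) + r^2)
            = 1 / (r^2 * (log r)^2) ↔ r = r0) := by
  intro r hr
  change cigarFactor r0 r ≤ cuspFactor r ∧ (cigarFactor r0 r = cuspFactor r ↔ r = r0)
  rcases eq_or_ne r r0 with rfl | hne
  · have hself := cigarFactor_self ((log_lt_iff_lt_exp h0).2 h1).ne
    exact ⟨hself.le, iff_of_true hself rfl⟩
  · have hlt := cigarFactor_lt_cuspFactor h0 h1 hr hne
    exact ⟨hlt.le, iff_of_false hlt.ne hne⟩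
end

section
/- The functions u_{r0} : B → ℝ are pointwise decreasing in r0: if 0 < r0 ≤ r0' < e^{-1}, then u_{r0'}(x) ≤ u_{r0}(x) for every x ∈ B. -/
open Real MeasureTheory Metric Set Filter Topology

/-- The conformal factor `h(x) = 1/(|x|² (log|x|)²)` of the hyperbolic cusp metric. -/
noncomputable def cuspH (x : EuclideanSpace ℝ (Fin 2)) : ℝ :=
  1 / (‖x‖^2 * (Real.log ‖x‖)^2)

/-- The `C¹` approximation `u_{r₀}` of the cusp: a cigar cap
`ε(r₀)/(δ(r₀)+|x|²)` for `|x| ≤ r₀`, and the cusp `h` for `|x| > r₀`. -/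
noncomputable def ucig (r0 : ℝ) (x : EuclideanSpace ℝ (Fin 2)) : ℝ :=
  if ‖x‖ ≤ r0 then
    (1 / ((-Real.log r0) * (-Real.log r0 - 1))) / (r0^2 / (-Real.log r0 - 1) + ‖x‖^2)
  else cuspH x

/-!
At distance `s` from the origin, the cap glued in at radius `r` is the reciprocal of
`Φ s r = L (r² + (L - 1) s²)` with `L = -log r`, and `Φ s s = s² (log s)²` is the reciprocal of the
cusp. Hence `u_r(x) = 1 / Φ |x| (max r |x|)`. Since `∂Φ/∂r = (2L - 1)(r² - s²) / r`, the function
`Φ s` is increasing on `[s, e^{-1/2}]`. For `e⁻¹ < r ≤ e^{-1/2}` the constants `δ`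
and `ε` are negative, but the factor `L - 1` cancels in `ε / (δ + s²)`, which is still `1 / Φ s r`.
-/

/-- `Φ s r`, the reciprocal of the cigar cap with gluing radius `r`,
evaluated at distance `s` from the origin. Clearing the factor `-log r - 1` from the denominators
makes it regular at `r = e⁻¹`. -/
noncomputable def capRecip (s r : ℝ) : ℝ :=
  -log r * (r ^ 2 + (-log r - 1) * s ^ 2)

theorem capRecip_self (s : ℝ) : capRecip s s = s ^ 2 * log s ^ 2 := by
  unfold capRecip
  ring

theorem hasDerivAt_capRecip (s : ℝ) {r : ℝ} (hr : r ≠ 0) :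
    HasDerivAt (capRecip s) ((-2 * log r - 1) * (r ^ 2 - s ^ 2) / r) r := by
  have hlog : HasDerivAt (fun t => -log t) (-r⁻¹) r := (hasDerivAt_log hr).neg
  have hsq : HasDerivAt (fun t : ℝ => t ^ 2) (2 * r) r := by simpa using hasDerivAt_pow 2 r
  refine (hlog.mul (hsq.add ((hlog.sub_const 1).mul_const (s ^ 2)))).congr_deriv ?_
  simp only [Pi.add_apply]
  field_simp
  ring

theorem monotoneOn_capRecip (s : ℝ) :
    MonotoneOn (capRecip s) (Ioc 0 (exp (-1 / 2)) ∩ Ici |s|) := by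
  have hderiv : ∀ r ∈ Ioc 0 (exp (-1 / 2)) ∩ Ici |s|, HasDerivAt (capRecip s) _ r :=
    fun r hr => hasDerivAt_capRecip s hr.1.1.ne'
  refine monotoneOn_of_hasDerivWithinAt_nonneg ((convex_Ioc _ _).inter (convex_Ici _))
    (fun r hr => (hderiv r hr).continuousAt.continuousWithinAt)
    (fun r hr => (hderiv r (interior_subset hr)).hasDerivWithinAt) fun r hr => ?_
  obtain ⟨⟨hr_pos, hr_le⟩, hsr⟩ := interior_subset hr
  have hlog : log r ≤ -1 / 2 := (log_le_iff_le_exp hr_pos).2 hr_le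
  have hsq : s ^ 2 ≤ r ^ 2 := sq_le_sq' (neg_le_of_abs_le hsr) (le_of_abs_le hsr)
  exact div_nonneg (mul_nonneg (by linarith) (sub_nonneg.2 hsq)) hr_pos.le

theorem capRecip_pos {s r : ℝ} (hr : 0 < r) (hr1 : r < 1) (hsr : |s| ≤ r) :
    0 < capRecip s r := by
  have hlog : 0 < -log r := neg_pos.2 (log_neg hr hr1)
  have hsum : 0 < (r ^ 2 - s ^ 2) + -log r * s ^ 2 := by
    rcases hsr.eq_or_lt with h | h
    · rw [← sq_abs s, h, sub_self, zero_add]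
      positivity
    · exact add_pos_of_pos_of_nonneg (sub_pos.2 (sq_lt_sq' (neg_lt_of_abs_lt h) (lt_of_abs_lt h)))
        (by positivity)
  calc 0 < -log r * ((r ^ 2 - s ^ 2) + -log r * s ^ 2) := mul_pos hlog hsum
    _ = capRecip s r := by unfold capRecip; ring

theorem ucig_eq_inv_capRecip {r : ℝ} (hr : log r ≠ -1) (x : EuclideanSpace ℝ (Fin 2)) :
    ucig r x = (capRecip ‖x‖ (max r ‖x‖))⁻¹ := by
  unfold ucig
  split_ifs with hx
  · have hL : -log r - 1 ≠ 0 := fun h => hr (by linarith)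
    rw [max_eq_left hx, div_div, mul_assoc, mul_add, mul_div_cancel₀ _ hL, one_div, capRecip]
  · rw [max_eq_right (not_le.1 hx).le, capRecip_self, cuspH, one_div]

theorem ucig_decreasing_in_r0_general {r r' : ℝ} (hr : 0 < r) (hrr' : r ≤ r')
    (hr' : r' ≤ exp (-1 / 2)) (hr_ne : r ≠ exp (-1)) (hr'_ne : r' ≠ exp (-1))
    (x : EuclideanSpace ℝ (Fin 2)) : ucig r' x ≤ ucig r x := by
  have hlog {t : ℝ} (ht : 0 < t) (ht_ne : t ≠ exp (-1)) : log t ≠ -1 :=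
    fun h => ht_ne (by rw [← h, exp_log ht])
  rw [ucig_eq_inv_capRecip (hlog hr hr_ne),
    ucig_eq_inv_capRecip (hlog (hr.trans_le hrr') hr'_ne)]
  rcases le_total r' ‖x‖ with hx | hx
  · rw [max_eq_right hx, max_eq_right (hrr'.trans hx)]
  · have hmax_pos : 0 < max r ‖x‖ := lt_max_of_lt_left hr
    have hmax_le : max r ‖x‖ ≤ r' := max_le hrr' hx
    have hlt_one : exp (-1 / 2) < 1 := exp_lt_one_iff.2 (by norm_num)
    have hnorm_le : |‖x‖| ≤ max r ‖x‖ := (abs_norm x).trans_le (le_max_right _ _)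
    rw [max_eq_left hx]
    exact inv_anti₀ (capRecip_pos hmax_pos ((hmax_le.trans hr').trans_lt hlt_one) hnorm_le)
      (monotoneOn_capRecip ‖x‖ ⟨⟨hmax_pos, hmax_le.trans hr'⟩, hnorm_le⟩
        ⟨⟨hr.trans_le hrr', hr'⟩, hnorm_le.trans hmax_le⟩ hmax_le)

/-- **Monotonicity of the approximations.** The functions `u_{r₀}` are pointwise
decreasing in `r₀`: if `0 < r₀ ≤ r₀' < e⁻¹` then `u_{r₀'} ≤ u_{r₀}` on `B`. -/
theorem ucig_decreasing_in_r0 (r0 r0' : ℝ) (h0 : 0 < r0) (h01 : r0 ≤ r0')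
    (h1 : r0' < exp (-1)) :
    ∀ x ∈ ball (0 : EuclideanSpace ℝ (Fin 2)) 1, ucig r0' x ≤ ucig r0 x := by
  have hexp : exp (-1) < exp (-1 / 2) := exp_lt_exp.2 (by norm_num)
  exact fun x _ => ucig_decreasing_in_r0_general h0 h01 (h1.trans hexp).le (h01.trans_lt h1).ne
    h1.ne x
end

section
/- As r0 ↓ 0, the functions u_{r0} converge to h in L¹(B): lim_{r0 → 0⁺} ∫_B |u_{r0}(x) − h(x)| dx = 0. -/
open Real MeasureTheory Metric Set Filter Topology

/-!
The cap and the cusp agree on `|x| = r₀`, so `u_{r₀} - h` lives on the disc `|x| < r₀`. There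
`0 ≤ u_{r₀} ≤ h`: with `L = -log r₀` and `t = log (r₀ / |x|)`, the upper bound reads
`(L + t)² ≤ L (e^{2t} + L - 1)`, which follows from `e^{2t} ≥ 1 + 2t + 2t²`. Hence the `L¹` distance
is at most the area `2π / (-log r₀)` of the cusp over the disc, because `-1 / log r` is a primitive
of the radial density `1 / (r (log r)²)` and vanishes at `0`.
-/

lemma setIntegral_ball_fun_norm_addHaar {E F : Type*} [NormedAddCommGroup E] [NormedSpace ℝ E]
    [Nontrivial E] [FiniteDimensional ℝ E] [MeasurableSpace E] [BorelSpace E]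
    [NormedAddCommGroup F] [NormedSpace ℝ F] (μ : Measure E) [μ.IsAddHaarMeasure]
    (f : ℝ → F) (r : ℝ) :
    ∫ x in ball (0 : E) r, f ‖x‖ ∂μ =
      Module.finrank ℝ E • μ.real (ball 0 1) •
        ∫ y in Ioo 0 r, y ^ (Module.finrank ℝ E - 1) • f y := by
  have hball : (ball (0 : E) r).indicator (fun x ↦ f ‖x‖) = fun x ↦ (Iio r).indicator f ‖x‖ := by
    ext x
    simp only [indicator, mem_ball_zero_iff, mem_Iio]
  have hsmul : (fun y : ℝ ↦ y ^ (Module.finrank ℝ E - 1) • (Iio r).indicator f y) =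
      (Iio r).indicator fun y ↦ y ^ (Module.finrank ℝ E - 1) • f y := by
    ext y
    rw [indicator_smul_apply]
  rw [← integral_indicator measurableSet_ball, hball, integral_fun_norm_addHaar, hsmul,
    setIntegral_indicator measurableSet_Iio, Ioi_inter_Iio]

section InvLog

lemma continuousAt_inv_log_zero : ContinuousAt (fun r : ℝ ↦ (log r)⁻¹) 0 := by
  rw [continuousAt_iff_punctured_nhds, log_zero, inv_zero]
  exact tendsto_inv_atBot_zero.comp tendsto_log_nhdsNE_zero

lemma continuousOn_inv_log : ContinuousOn (fun r : ℝ ↦ (log r)⁻¹) (Ioo (-1) 1) := by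
  intro r hr
  rcases eq_or_ne r 0 with rfl | hr₀
  · exact continuousAt_inv_log_zero.continuousWithinAt
  · exact (differentiableAt_inv_log hr₀ hr.2.ne hr.1.ne').continuousAt.continuousWithinAt

variable {r : ℝ}

lemma continuousOn_neg_inv_log_Icc (hr : r < 1) :
    ContinuousOn (fun y : ℝ ↦ -(log y)⁻¹) (Icc 0 r) :=
  (continuousOn_inv_log.mono fun _ hy ↦ ⟨neg_one_lt_zero.trans_le hy.1, hy.2.trans_lt hr⟩).neg

lemma hasDerivAt_neg_inv_log (hr₀ : 0 < r) (hr₁ : r ≠ 1) :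
    HasDerivAt (fun y : ℝ ↦ -(log y)⁻¹) (r⁻¹ / log r ^ 2) r := by
  have hderiv := (hasDerivAt_inv_log hr₀.ne' hr₁ (by linarith)).fun_neg
  rwa [neg_div, neg_neg] at hderiv

lemma integrableOn_inv_div_log_sq_Ioc (hr : r < 1) :
    IntegrableOn (fun y : ℝ ↦ y⁻¹ / log y ^ 2) (Ioc 0 r) := by
  refine intervalIntegral.integrableOn_deriv_of_nonneg (continuousOn_neg_inv_log_Icc hr)
    (fun y hy ↦ hasDerivAt_neg_inv_log hy.1 (hy.2.trans hr).ne) fun y hy ↦ ?_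
  have := hy.1
  positivity

lemma integral_inv_div_log_sq_zero_left (hr₀ : 0 ≤ r) (hr₁ : r < 1) :
    ∫ y in 0..r, y⁻¹ / log y ^ 2 = -(log r)⁻¹ := by
  rw [intervalIntegral.integral_eq_sub_of_hasDerivAt_of_le hr₀ (continuousOn_neg_inv_log_Icc hr₁)
    (fun y hy ↦ hasDerivAt_neg_inv_log hy.1 (hy.2.trans hr₁).ne)
    ((intervalIntegrable_iff_integrableOn_Ioc_of_le hr₀).2 (integrableOn_inv_div_log_sq_Ioc hr₁)),
    log_zero, inv_zero, neg_zero, sub_zero]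

end InvLog

section Cusp

variable {r : ℝ}

lemma cuspH_nonneg (x : EuclideanSpace ℝ (Fin 2)) : 0 ≤ cuspH x := by
  unfold cuspH
  positivity

lemma mul_one_div_sq_mul_log_sq (y : ℝ) : y * (1 / (y ^ 2 * log y ^ 2)) = y⁻¹ / log y ^ 2 := by
  rcases eq_or_ne y 0 with rfl | hy
  · rw [zero_mul, inv_zero, zero_div]
  · field_simp

lemma integrableOn_cuspH_ball (hr : r < 1) :
    IntegrableOn cuspH (ball (0 : EuclideanSpace ℝ (Fin 2)) r) := by
  refine (integrableOn_fun_norm_addHaar (E := EuclideanSpace ℝ (Fin 2)) volume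
    (f := fun y ↦ 1 / (y ^ 2 * log y ^ 2))).2 ?_
  simp only [finrank_euclideanSpace_fin, Nat.add_one_sub_one, pow_one, smul_eq_mul,
    mul_one_div_sq_mul_log_sq]
  exact (integrableOn_inv_div_log_sq_Ioc hr).mono_set Ioo_subset_Ioc_self

theorem setIntegral_cuspH_ball (hr₀ : 0 ≤ r) (hr₁ : r < 1) :
    ∫ x in ball (0 : EuclideanSpace ℝ (Fin 2)) r, cuspH x = 2 * π / -log r := by
  have hdisc : volume.real (ball (0 : EuclideanSpace ℝ (Fin 2)) 1) = π := by
    simp [measureReal_def, pi_nonneg]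
  calc ∫ x in ball (0 : EuclideanSpace ℝ (Fin 2)) r, cuspH x
      = 2 * (π * ∫ y in Ioo 0 r, y⁻¹ / log y ^ 2) := by
        have hpolar := setIntegral_ball_fun_norm_addHaar
          (volume : Measure (EuclideanSpace ℝ (Fin 2))) (fun y ↦ 1 / (y ^ 2 * log y ^ 2)) r
        simp only [finrank_euclideanSpace_fin, hdisc, Nat.add_one_sub_one, pow_one,
          nsmul_eq_mul, Nat.cast_ofNat, smul_eq_mul, mul_one_div_sq_mul_log_sq] at hpolar
        exact hpolar
    _ = 2 * (π * -(log r)⁻¹) := by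
        rw [← integral_Ioc_eq_integral_Ioo, ← intervalIntegral.integral_of_le hr₀,
          integral_inv_div_log_sq_zero_left hr₀ hr₁]
    _ = 2 * π / -log r := by rw [← inv_neg, ← mul_assoc, div_eq_mul_inv]

end Cusp

section Cigar

variable {r₀ : ℝ} {x : EuclideanSpace ℝ (Fin 2)}

lemma add_sq_le_mul_exp_two_mul {L t : ℝ} (hL : 1 / 2 ≤ L) (ht : 0 ≤ t) :
    (L + t) ^ 2 ≤ L * (exp (2 * t) + (L - 1)) := by
  have hexp : 1 + 2 * t + (2 * t) ^ 2 / 2 ≤ exp (2 * t) :=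
    quadratic_le_exp_of_nonneg (by positivity)
  calc (L + t) ^ 2 ≤ L * (1 + 2 * t + (2 * t) ^ 2 / 2 + (L - 1)) := by
        linear_combination t ^ 2 * (2 * hL)
    _ ≤ L * (exp (2 * t) + (L - 1)) := by gcongr

lemma sq_mul_log_sq_le {r : ℝ} (hr : 0 < r) (hrr₀ : r ≤ r₀) (hlog : log r₀ ≤ -(1 / 2)) :
    r ^ 2 * log r ^ 2 ≤ -log r₀ * (r₀ ^ 2 + (-log r₀ - 1) * r ^ 2) := by
  have hr₀ : 0 < r₀ := hr.trans_le hrr₀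
  set t := log (r₀ / r) with ht
  have hlog_r : log r = -(-log r₀ + t) := by
    rw [ht, log_div hr₀.ne' hr.ne']
    ring
  have hexp : exp (2 * t) * r ^ 2 = r₀ ^ 2 := by
    rw [two_mul, exp_add, ht, exp_log (div_pos hr₀ hr)]
    field_simp
  have ht₀ : 0 ≤ t := log_nonneg ((one_le_div₀ hr).2 hrr₀)
  calc r ^ 2 * log r ^ 2 = r ^ 2 * (-log r₀ + t) ^ 2 := by rw [hlog_r, neg_sq]
    _ ≤ r ^ 2 * (-log r₀ * (exp (2 * t) + (-log r₀ - 1))) := by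
        gcongr
        exact add_sq_le_mul_exp_two_mul (by linarith) ht₀
    _ = -log r₀ * (r₀ ^ 2 + (-log r₀ - 1) * r ^ 2) := by
        rw [← hexp]
        ring

lemma ucig_of_norm_le (hlog : log r₀ ≠ -1) (hx : ‖x‖ ≤ r₀) :
    ucig r₀ x = 1 / (-log r₀ * (r₀ ^ 2 + (-log r₀ - 1) * ‖x‖ ^ 2)) := by
  have hL : -log r₀ - 1 ≠ 0 := fun h ↦ hlog (by linarith)
  rw [ucig, if_pos hx, div_div, mul_assoc, mul_add, mul_div_cancel₀ _ hL]

lemma ucig_of_le_norm (hlog : log r₀ ≠ -1) (hx : r₀ ≤ ‖x‖) : ucig r₀ x = cuspH x := by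
  rcases hx.eq_or_lt with hx | hx
  · rw [ucig_of_norm_le hlog hx.ge, cuspH, ← hx]
    ring_nf
  · rw [ucig, if_neg hx.not_ge]

lemma ucig_nonneg (hlog : log r₀ < -1) : 0 ≤ ucig r₀ x := by
  have hL : 0 < -log r₀ - 1 := by linarith
  have hL' : 0 < -log r₀ := by linarith
  rcases le_total ‖x‖ r₀ with hx | hx
  · rw [ucig_of_norm_le hlog.ne hx]
    positivity
  · exact (ucig_of_le_norm hlog.ne hx).symm ▸ cuspH_nonneg x

-- Pitfall at the cusp point: `cuspH 0 = 1 / 0 = 0`, although `h` blows up there.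
lemma ucig_le_cuspH (hlog : log r₀ < -1) (hx : x ≠ 0) : ucig r₀ x ≤ cuspH x := by
  rcases le_total ‖x‖ r₀ with hxr | hxr
  · have hx₀ : 0 < ‖x‖ := norm_pos_iff.2 hx
    have hlog_x : log ‖x‖ < 0 := by linarith [log_le_log hx₀ hxr]
    rw [ucig_of_norm_le hlog.ne hxr, cuspH]
    have : 0 < log ‖x‖ ^ 2 := sq_pos_of_neg hlog_x
    exact one_div_le_one_div_of_le (by positivity) (sq_mul_log_sq_le hx₀ hxr (by linarith))
  · exact (ucig_of_le_norm hlog.ne hxr).le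

lemma abs_ucig_sub_cuspH_le (hlog : log r₀ < -1) (hx : x ≠ 0) :
    |ucig r₀ x - cuspH x| ≤ cuspH x := by
  rw [abs_of_nonpos (sub_nonpos.2 (ucig_le_cuspH hlog hx)), neg_sub]
  exact sub_le_self _ (ucig_nonneg hlog)

lemma measurable_cuspH : Measurable cuspH := by
  unfold cuspH
  fun_prop

lemma measurable_ucig (r₀ : ℝ) : Measurable (ucig r₀) :=
  Measurable.ite (measurableSet_le measurable_norm measurable_const) (by fun_prop)
    measurable_cuspH

lemma ae_abs_ucig_sub_cuspH_le (hlog : log r₀ < -1) :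
    ∀ᵐ x, |ucig r₀ x - cuspH x| ≤ cuspH x := by
  filter_upwards [Measure.ae_ne volume 0] with x hx using abs_ucig_sub_cuspH_le hlog hx

lemma integrableOn_ucig_sub_cuspH_ball {r : ℝ} (hr : r < 1) (hlog : log r₀ < -1) :
    IntegrableOn (fun x ↦ ucig r₀ x - cuspH x) (ball 0 r) :=
  (integrableOn_cuspH_ball hr).mono'
    ((measurable_ucig r₀).sub measurable_cuspH).aestronglyMeasurable
    (ae_restrict_of_ae (ae_abs_ucig_sub_cuspH_le hlog))

theorem setIntegral_abs_ucig_sub_cuspH_le (hr₀ : 0 ≤ r₀) (hlog : log r₀ < -1) :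
    ∫ x in ball (0 : EuclideanSpace ℝ (Fin 2)) 1, |ucig r₀ x - cuspH x| ≤ 2 * π / -log r₀ := by
  have hr₁ : r₀ < 1 := lt_of_not_ge fun h ↦ by linarith [log_nonneg h]
  have hsupport : ∀ x ∈ ball (0 : EuclideanSpace ℝ (Fin 2)) 1 \ ball 0 r₀,
      |ucig r₀ x - cuspH x| = 0 := by
    rintro x ⟨-, hx⟩
    rw [mem_ball_zero_iff, not_lt] at hx
    rw [ucig_of_le_norm hlog.ne hx, sub_self, abs_zero]
  calc ∫ x in ball (0 : EuclideanSpace ℝ (Fin 2)) 1, |ucig r₀ x - cuspH x|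
      = ∫ x in ball (0 : EuclideanSpace ℝ (Fin 2)) r₀, |ucig r₀ x - cuspH x| :=
        setIntegral_eq_of_subset_of_forall_sdiff_eq_zero measurableSet_ball
          (ball_subset_ball hr₁.le) hsupport
    _ ≤ ∫ x in ball (0 : EuclideanSpace ℝ (Fin 2)) r₀, cuspH x :=
        setIntegral_mono_ae (integrableOn_ucig_sub_cuspH_ball hr₁ hlog).abs
          (integrableOn_cuspH_ball hr₁) (ae_abs_ucig_sub_cuspH_le hlog)
    _ = 2 * π / -log r₀ := setIntegral_cuspH_ball hr₀ hr₁

end Cigar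

/-- **`L¹` convergence of the approximations.** As `r₀ ↓ 0`, the functions `u_{r₀}`
converge to the cusp conformal factor `h` in `L¹(B)`. -/
theorem ucig_tendsto_L1 :
    Tendsto (fun r0 : ℝ => ∫ x in ball (0 : EuclideanSpace ℝ (Fin 2)) 1,
        |ucig r0 x - cuspH x|) (𝓝[>] 0) (𝓝 0) := by
  have hbound : ∀ᶠ r₀ : ℝ in 𝓝[>] 0,
      ∫ x in ball (0 : EuclideanSpace ℝ (Fin 2)) 1, |ucig r₀ x - cuspH x| ≤ 2 * π / -log r₀ := by
    filter_upwards [self_mem_nhdsWithin, tendsto_log_nhdsGT_zero.eventually_lt_atBot (-1)]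
      with r₀ hr₀ hlog using setIntegral_abs_ucig_sub_cuspH_le (le_of_lt hr₀) hlog
  have hlim : Tendsto (fun r₀ : ℝ ↦ 2 * π / -log r₀) (𝓝[>] 0) (𝓝 0) :=
    tendsto_const_nhds.div_atTop (tendsto_neg_atBot_atTop.comp tendsto_log_nhdsGT_zero)
  exact squeeze_zero' (.of_forall fun _ ↦ integral_nonneg fun _ ↦ abs_nonneg _) hbound hlim
end

section
/- There is a universal constant C > 0 such that for every x ∈ B with 0 < |x| < 1, the quantity h(x)^{-1} |∇ log((1/2) log h)(x)|² is equal to (log|x| + 1)² / (log(|x| · |log|x||))², and this quantity is bounded above by C. -/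
open Real MeasureTheory Metric Set Filter Topology

/-!
The function `log ((1/2) log h)` is radial, equal to `log (-log (r |log r|))` with `r = |x|`, so its
gradient has norm `|(log r + 1) / (r log r · log (r |log r|))|`, and the factor `h⁻¹ = (r log r)²`
cancels `r log r`. In terms of `t = -log r > 0` the result is `((t - 1) / (t - log t))²`. The
denominator never vanishes because `log t < t`, and the quotient stays bounded as `t → ∞` because
`log t ≤ t / 2`.
-/

/-- The cusp factor `h` as a function of the radius `r = |x|`, so that `h` makes sense on a Hilbert
space of any dimension; `cuspH x` is definitionally `cuspProfile ‖x‖`. -/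
noncomputable def cuspProfile (r : ℝ) : ℝ :=
  1 / (r ^ 2 * log r ^ 2)

theorem norm_gradient_comp_norm {E : Type*} [NormedAddCommGroup E] [InnerProductSpace ℝ E]
    [CompleteSpace E] [Nontrivial E] {φ : ℝ → ℝ} {φ' : ℝ} {x : E} (hx : x ≠ 0)
    (hφ : HasDerivAt φ φ' ‖x‖) :
    ‖gradient (fun y => φ ‖y‖) x‖ = |φ'| := by
  have hnorm : DifferentiableAt ℝ (fun y : E => ‖y‖) x := differentiableAt_id.norm ℝ hx
  have hfderiv : fderiv ℝ (fun y => φ ‖y‖) x = φ' • fderiv ℝ (fun y : E => ‖y‖) x :=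
    (hφ.comp_hasFDerivAt x hnorm.hasFDerivAt).fderiv
  rw [gradient, LinearIsometryEquiv.norm_map, hfderiv, norm_smul, norm_fderiv_norm hnorm, mul_one,
    Real.norm_eq_abs]

theorem log_mul_abs (a b : ℝ) : log (a * |b|) = log (a * b) := by
  rw [← log_abs (a * |b|), abs_mul, abs_abs, ← abs_mul, log_abs]

theorem half_mul_log_cuspProfile (r : ℝ) : (1/2) * log (cuspProfile r) = -log (r * log r) := by
  rw [cuspProfile, ← mul_pow, one_div (_ ^ 2), log_inv, log_pow]
  push_cast
  ring

theorem hasDerivAt_log_half_mul_log_cuspProfile {r : ℝ} (hlog : log r ≠ 0)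
    (hloglog : log (r * log r) ≠ 0) :
    HasDerivAt (fun s => log ((1/2) * log (cuspProfile s)))
      ((log r + 1) / (r * log r) / log (r * log r)) r := by
  have hr : r ≠ 0 := (log_ne_zero.mp hlog).1
  simp only [half_mul_log_cuspProfile, log_neg_eq_log]
  exact ((hasDerivAt_mul_log hr).log (mul_ne_zero hr hlog)).log hloglog

theorem inv_cuspProfile_mul_sq_norm_gradient {E : Type*} [NormedAddCommGroup E]
    [InnerProductSpace ℝ E] [CompleteSpace E] [Nontrivial E] {x : E} (hlog : log ‖x‖ ≠ 0)
    (hloglog : log (‖x‖ * |log ‖x‖|) ≠ 0) :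
    (cuspProfile ‖x‖)⁻¹ * ‖gradient (fun y => log ((1/2) * log (cuspProfile ‖y‖))) x‖ ^ 2
      = (log ‖x‖ + 1) ^ 2 / log (‖x‖ * |log ‖x‖|) ^ 2 := by
  have hr : ‖x‖ ≠ 0 := (log_ne_zero.mp hlog).1
  rw [log_mul_abs] at hloglog ⊢
  rw [norm_gradient_comp_norm (norm_ne_zero_iff.mp hr)
    (hasDerivAt_log_half_mul_log_cuspProfile hlog hloglog), sq_abs, cuspProfile]
  field_simp

theorem two_mul_log_le_self {t : ℝ} (ht : 0 < t) : 2 * log t ≤ t := by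
  have hhalf : log (t / 2) ≤ t / 2 - 1 := log_le_sub_one_of_pos (half_pos ht)
  have htwo : log 2 ≤ 2 - 1 := log_le_sub_one_of_pos two_pos
  rw [log_div ht.ne' two_ne_zero] at hhalf
  linarith

theorem abs_sub_one_le_two_mul_sub_log {t : ℝ} (ht : 0 < t) : |t - 1| ≤ 2 * (t - log t) := by
  have hlog_le_sub_one : log t ≤ t - 1 := log_le_sub_one_of_pos ht
  have hlog_le_half : 2 * log t ≤ t := two_mul_log_le_self ht
  exact abs_le.mpr ⟨by linarith, by linarith⟩

theorem log_mul_abs_log_neg {r : ℝ} (hr₀ : 0 < r) (hr₁ : r < 1) : log (r * |log r|) < 0 := by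
  refine log_neg (mul_pos hr₀ (abs_pos.mpr (log_neg hr₀ hr₁).ne)) ?_
  simpa only [abs_mul, abs_of_pos hr₀, mul_comm] using abs_log_mul_self_lt r hr₀ hr₁.le

theorem abs_log_add_one_le {r : ℝ} (hr₀ : 0 < r) (hr₁ : r < 1) :
    |log r + 1| ≤ 2 * |log (r * |log r|)| := by
  have hlog : log r < 0 := log_neg hr₀ hr₁
  calc |log r + 1| = |-log r - 1| := by rw [← abs_neg, neg_add']
    _ ≤ 2 * (-log r - log (-log r)) := abs_sub_one_le_two_mul_sub_log (neg_pos.mpr hlog)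
    _ = 2 * |log (r * |log r|)| := by
      rw [abs_of_neg (log_mul_abs_log_neg hr₀ hr₁), log_mul hr₀.ne' (abs_pos.mpr hlog.ne).ne',
        abs_of_neg hlog, neg_add']

theorem sq_log_add_one_div_sq_log_mul_abs_log_le {r : ℝ} (hr₀ : 0 < r) (hr₁ : r < 1) :
    (log r + 1) ^ 2 / log (r * |log r|) ^ 2 ≤ 4 := by
  have hpos : 0 < log (r * |log r|) ^ 2 := sq_pos_of_neg (log_mul_abs_log_neg hr₀ hr₁)
  rw [div_le_iff₀ hpos]
  calc (log r + 1) ^ 2 = |log r + 1| ^ 2 := (sq_abs _).symm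
    _ ≤ (2 * |log (r * |log r|)|) ^ 2 := by gcongr; exact abs_log_add_one_le hr₀ hr₁
    _ = 4 * log (r * |log r|) ^ 2 := by rw [mul_pow, sq_abs]; norm_num

theorem cusp_gradient_bound_general {E : Type*} [NormedAddCommGroup E] [InnerProductSpace ℝ E]
    [CompleteSpace E] [Nontrivial E] {x : E} (hx₀ : 0 < ‖x‖) (hx₁ : ‖x‖ < 1) :
    (cuspProfile ‖x‖)⁻¹ * ‖gradient (fun y => log ((1/2) * log (cuspProfile ‖y‖))) x‖ ^ 2
        = (log ‖x‖ + 1) ^ 2 / log (‖x‖ * |log ‖x‖|) ^ 2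
      ∧ (cuspProfile ‖x‖)⁻¹ *
          ‖gradient (fun y => log ((1/2) * log (cuspProfile ‖y‖))) x‖ ^ 2 ≤ 4 := by
  have hgradient := inv_cuspProfile_mul_sq_norm_gradient (log_neg hx₀ hx₁).ne
    (log_mul_abs_log_neg hx₀ hx₁).ne
  exact ⟨hgradient, hgradient.trans_le (sq_log_add_one_div_sq_log_mul_abs_log_le hx₀ hx₁)⟩

/-- **Gradient bound for the cusp.** There is a universal `C > 0` such that for
`0 < |x| < 1`, `h⁻¹|∇ log((1/2) log h)|²` equals
`(log|x| + 1)²/(log(|x|·|log|x||))²`, and this is bounded by `C`. -/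
theorem cusp_gradient_bound :
    ∃ C : ℝ, 0 < C ∧ ∀ x : EuclideanSpace ℝ (Fin 2), 0 < ‖x‖ → ‖x‖ < 1 →
      (cuspH x)⁻¹ * ‖gradient (fun y => log ((1/2) * log (cuspH y))) x‖^2
          = (log ‖x‖ + 1)^2 / (log (‖x‖ * |log ‖x‖|))^2
        ∧ (cuspH x)⁻¹ * ‖gradient (fun y => log ((1/2) * log (cuspH y))) x‖^2 ≤ C :=
  ⟨4, four_pos, fun _ hx₀ hx₁ => cusp_gradient_bound_general hx₀ hx₁⟩
end

section
/- For r0 ∈ (0, e^{-1}) and t > 0 define ũ_{r0}(0,t) = ε(r0)/(δ(r0) e^{4t/ε(r0)}) (the value at the origin at time t of the cigar Ricci flow starting from ũ_{r0}). Then −log ũ_{r0}(0,t) = 2 log r0 + log(−log r0) + 4t(−log r0)(−log r0 − 1). Moreover, for each fixed t ∈ (0, 1/4), this expression is minimized over r0 ∈ (0, e^{-1}) exactly at r0 = e^{-1/(4t)}, and sup_{r0 ∈ (0,e^{-1})} ũ_{r0}(0,t) = 4t · e^{1/(4t) + 1}. -/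
open Real MeasureTheory Metric Set Filter Topology

/-- `δ(r₀) = r₀²/(-log r₀ - 1)`. -/
noncomputable def cigDelta (r0 : ℝ) : ℝ := r0^2 / (-Real.log r0 - 1)

/-- `ε(r₀) = 1/((-log r₀)(-log r₀ - 1))`. -/
noncomputable def cigEps (r0 : ℝ) : ℝ := 1 / ((-Real.log r0) * (-Real.log r0 - 1))

/-- The value at the origin at time `t` of the cigar Ricci flow starting from
`ε(r₀)/(δ(r₀)+|x|²)`. -/
noncomputable def cigOrigin (r0 t : ℝ) : ℝ :=
  cigEps r0 / (cigDelta r0 * Real.exp (4 * t / cigEps r0))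

/-!
Put `s = 4t` and `L = -log r₀`, so that `r₀ ∈ (0, e⁻¹)` means `L > 1` and
`-log ũ_{r₀}(0,t)` becomes `g(L) = log L - 2L + sL(L - 1)`. Its critical point with `L > 1` is
`L = 1/s`, and the gap `g(L) - g(1/s)` is the sum of the deficit `y - 1 - log y ≥ 0` at
`y = 1/(sL)`, which vanishes only for `y = 1`, and of `(sL - 1)²(L - 1)/(sL) ≥ 0`.
-/

/-- The function `-log ũ_{r₀}(0,t)` in the variables `s = 4t` and `L = -log r₀`, in which its
minimization is an elementary inequality for the logarithm. -/
noncomputable def cigProfile (s L : ℝ) : ℝ := log L - 2 * L + s * L * (L - 1)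

lemma cigProfile_inv {s : ℝ} (hs : s ≠ 0) : cigProfile s s⁻¹ = -(log s + s⁻¹ + 1) := by
  rw [cigProfile, log_inv, mul_inv_cancel₀ hs]
  ring

lemma cigProfile_sub_cigProfile_inv {s L : ℝ} (hs : s ≠ 0) (hL : L ≠ 0) :
    cigProfile s L - cigProfile s s⁻¹ =
      ((s * L)⁻¹ - 1 - log (s * L)⁻¹) + (s * L - 1) ^ 2 * (L - 1) / (s * L) := by
  rw [cigProfile_inv hs, cigProfile, log_inv, log_mul hs hL]
  field_simp
  ring

lemma cigProfile_inv_lt {s L : ℝ} (hs : 0 < s) (hL : 1 ≤ L) (hne : L ≠ s⁻¹) :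
    cigProfile s s⁻¹ < cigProfile s L := by
  have hL0 : 0 < L := by linarith
  have hy : (s * L)⁻¹ ≠ 1 := fun h => hne (eq_inv_of_mul_eq_one_right (inv_eq_one.mp h))
  have hlog : log (s * L)⁻¹ < (s * L)⁻¹ - 1 := log_lt_sub_one_of_pos (by positivity) hy
  have hsq : 0 ≤ (s * L - 1) ^ 2 * (L - 1) / (s * L) :=
    div_nonneg (mul_nonneg (sq_nonneg _) (sub_nonneg.mpr hL)) (by positivity)
  linarith [cigProfile_sub_cigProfile_inv hs.ne' hL0.ne']

lemma isLeast_cigProfile_image {s : ℝ} (hs : 0 < s) (hs1 : s < 1) :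
    IsLeast (cigProfile s '' Ioi 1) (cigProfile s s⁻¹) := by
  refine ⟨mem_image_of_mem _ ((one_lt_inv₀ hs).mpr hs1), forall_mem_image.mpr fun L hL => ?_⟩
  obtain rfl | hne := eq_or_ne L s⁻¹
  · exact le_rfl
  · exact (cigProfile_inv_lt hs (le_of_lt hL) hne).le

lemma cigOrigin_exp_neg {L : ℝ} (hL : 0 < L) (hL1 : L ≠ 1) (t : ℝ) :
    cigOrigin (exp (-L)) t = exp (-cigProfile (4 * t) L) := by
  have hL1' : L - 1 ≠ 0 := sub_ne_zero.mpr hL1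
  have hprofile : exp (-cigProfile (4 * t) L) =
      exp (2 * L) / L / exp (4 * t * L * (L - 1)) := by
    have hsplit : -cigProfile (4 * t) L = 2 * L - log L - 4 * t * L * (L - 1) := by
      rw [cigProfile]
      ring
    rw [hsplit, exp_sub, exp_sub, exp_log hL]
  have htime : 4 * t / (1 / (L * (L - 1))) = 4 * t * L * (L - 1) := by
    rw [div_div_eq_mul_div, div_one, mul_assoc (4 * t)]
  rw [hprofile, cigOrigin, cigEps, cigDelta, log_exp, neg_neg, htime,
    exp_neg, two_mul, exp_add]
  field_simp

lemma neg_log_cigOrigin_exp_neg {L : ℝ} (hL : 0 < L) (hL1 : L ≠ 1) (t : ℝ) :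
    -log (cigOrigin (exp (-L)) t) = cigProfile (4 * t) L := by
  rw [cigOrigin_exp_neg hL hL1, log_exp, neg_neg]

lemma image_exp_neg_Ioi (a : ℝ) : (fun L => exp (-L)) '' Ioi a = Ioo 0 (exp (-a)) := by
  ext r
  constructor
  · rintro ⟨L, hL, rfl⟩
    exact ⟨exp_pos _, exp_lt_exp.mpr (neg_lt_neg hL)⟩
  · rintro ⟨hr, hra⟩
    exact ⟨-log r, lt_neg_of_lt_neg ((log_lt_iff_lt_exp hr).mpr hra), by simp [exp_log hr]⟩

lemma cigOrigin_image_Ioo (t : ℝ) :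
    (fun r0 => cigOrigin r0 t) '' Ioo 0 (exp (-1)) =
      (fun y => exp (-y)) '' (cigProfile (4 * t) '' Ioi 1) := by
  rw [← image_exp_neg_Ioi, image_image, image_image]
  exact image_congr fun L (hL : 1 < L) => cigOrigin_exp_neg (by linarith) hL.ne' t

/-- **Sharp lower bound at the origin via the cigar family.**
`-log ũ_{r₀}(0,t) = 2 log r₀ + log(-log r₀) + 4t(-log r₀)(-log r₀ - 1)`; for fixed
`t ∈ (0,1/4)` this is minimized over `r₀ ∈ (0,e⁻¹)` exactly at `r₀ = e^{-1/(4t)}`,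
and `sup_{r₀} ũ_{r₀}(0,t) = 4t e^{1/(4t)+1}`, the sup being attained. -/
theorem cigar_origin_optimization :
    (∀ r0 t : ℝ, 0 < r0 → r0 < exp (-1) →
      -log (cigOrigin r0 t)
        = 2 * log r0 + log (-log r0) + 4 * t * (-log r0) * (-log r0 - 1)) ∧
    (∀ t : ℝ, 0 < t → t < 1/4 →
      (∀ r0 ∈ Ioo (0:ℝ) (exp (-1)), r0 ≠ exp (-(1/(4*t))) →
        -log (cigOrigin (exp (-(1/(4*t)))) t) < -log (cigOrigin r0 t)) ∧
      IsGreatest ((fun r0 => cigOrigin r0 t) '' Ioo (0:ℝ) (exp (-1)))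
        (4 * t * exp (1/(4*t) + 1))) := by
  have hlog (L : ℝ) (hL : 1 < L) (t : ℝ) :
      -log (cigOrigin (exp (-L)) t) = cigProfile (4 * t) L :=
    neg_log_cigOrigin_exp_neg (by linarith) hL.ne' t
  refine ⟨fun r0 t hr hre => ?_, fun t ht ht4 => ?_⟩
  · obtain ⟨L, hL, rfl⟩ := (image_exp_neg_Ioi 1).ge ⟨hr, hre⟩
    rw [hlog L hL, log_exp, neg_neg, cigProfile]
    ring
  have hs : 0 < 4 * t := by linarith
  have hs1 : 4 * t < 1 := by linarith
  rw [one_div]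
  constructor
  · rw [← image_exp_neg_Ioi, forall_mem_image]
    intro L hL hne
    rw [hlog _ ((one_lt_inv₀ hs).mpr hs1), hlog L hL]
    exact cigProfile_inv_lt hs (le_of_lt hL) fun h => hne (by rw [h])
  · have hmax : 4 * t * exp ((4 * t)⁻¹ + 1) = exp (-cigProfile (4 * t) (4 * t)⁻¹) := by
      rw [cigProfile_inv hs.ne', neg_neg, add_assoc, exp_add (log _), exp_log hs]
    rw [cigOrigin_image_Ioo, hmax]
    have hanti : Antitone fun y : ℝ => exp (-y) := exp_monotone.comp_antitone fun _ _ => neg_le_neg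
    exact hanti.map_isLeast (isLeast_cigProfile_image hs hs1)
end
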